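/- arXiv:2404.07587 — 3 statements merged into one kernel-verified Lean document; each statement's English description precedes it below -/
import Mathlib

section
/- Let (W, W') be an exchangeable pair of real-valued random variables with E(W − W' | W) = λ·W + R almost surely, for some constant 0 < λ < 1 and some random variable R measurable with respect to σ(W), and set Δ := W − W'. If |W − W'| ≤ A almost surely for some A > 0 and E|W| ≤ 2, then d_K(W, Z) ≤ E|1 − (1/(2λ))·E(Δ² | W)| + E|R|/λ + 3·A. -/
/-!
The proof is Stein's method for exchangeable pairs. Let `f = steinSol z` be the bounded solution of
`f' w - w f w = 1_{w ≤ z} - Φ z`, so that `P(W ≤ z) - Φ z = E f'(W) - E W f(W)`, and let `m` be the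
Mills ratio. The formula `1 - w m(w) = ∫_{t > 0} t exp (-(w t + t² / 2))` shows that `w m(w)`
increases and stays below `1`; hence `w f w` increases and lies in `[Φ z - 1, Φ z]`.

Write `Δ = W - W'`. By exchangeability
`E Δ (f(W) - f(W')) = 2 E f(W) Δ = 2 (λ E W f(W) + E R f(W))`, hence
`E f'(W) - E W f(W) = E f'(W) (1 - Δ² / (2λ)) + E R f(W) / λ - ε / (2λ)` with
`ε = E Δ (f(W) - f(W')) - E Δ² f'(W)`. Exchangeability also replaces `f'(W)` in `ε` by the
average of `f'(W)` and `f'(W')`, which makes `ε` the error of a trapezoid rule. Up to a constant,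
`f'` is the increasing function `w f w` plus a decreasing indicator; if `g` is their difference,
the error is at most `(A / 2) Δ (g(W) - g(W'))`, whose expectation is
`A E g(W) Δ = A E g(W) (λ W + R) ≤ A (λ E|W| + E|R|)`. So
`|ε| / (2λ) ≤ (A / 2) (E|W| + E|R| / λ)`, and one may assume `E|R| / λ < 1`, since otherwise the
claim is trivial.
-/

open MeasureTheory ProbabilityTheory Real

/-- The standard normal cumulative distribution function. -/
noncomputable def stdNormalCDF (z : ℝ) : ℝ :=
  (ProbabilityTheory.gaussianReal 0 1 (Set.Iic z)).toReal

open Set Filter Topology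

namespace SteinMethod

/-! ### Gaussian tails and the Mills ratio -/

local notation "φ" => gaussianPDFReal 0 1
local notation "Φ" => stdNormalCDF

lemma gaussianPDFReal_zero_one (x : ℝ) : φ x = (√(2 * π))⁻¹ * exp (-(x ^ 2 / 2)) := by
  simp [gaussianPDFReal, neg_div]

lemma gaussianPDFReal_zero_one_pos (x : ℝ) : 0 < φ x :=
  gaussianPDFReal_pos 0 1 x one_ne_zero

lemma gaussianPDFReal_zero_one_neg (x : ℝ) : φ (-x) = φ x := by
  simp [gaussianPDFReal_zero_one]

lemma gaussianPDFReal_zero_one_le_half (x : ℝ) : φ x ≤ 1 / 2 := by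
  have h_sqrt : 2 ≤ √(2 * π) := Real.le_sqrt_of_sq_le (by linarith [pi_gt_three])
  have h_exp : exp (-(x ^ 2 / 2)) ≤ 1 := exp_le_one_iff.2 (by nlinarith [sq_nonneg x])
  rw [gaussianPDFReal_zero_one, inv_mul_eq_div, div_le_div_iff₀ (by positivity) two_pos]
  linarith

lemma gaussianPDFReal_zero_one_add (t w : ℝ) :
    φ (t + w) = φ w * exp (-(w * t + t ^ 2 / 2)) := by
  rw [gaussianPDFReal_zero_one, gaussianPDFReal_zero_one, mul_assoc, ← exp_add]
  ring_nf

lemma hasDerivAt_gaussianPDFReal_zero_one (x : ℝ) : HasDerivAt φ (-(x * φ x)) x := by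
  have h := (((hasDerivAt_pow 2 x).div_const 2).fun_neg.exp).const_mul (√(2 * π))⁻¹
  rw [funext gaussianPDFReal_zero_one]
  refine h.congr_deriv ?_
  simp only [Nat.cast_ofNat, Nat.add_one_sub_one, pow_one]
  ring

lemma continuous_gaussianPDFReal_zero_one : Continuous φ :=
  continuous_iff_continuousAt.2 fun x => (hasDerivAt_gaussianPDFReal_zero_one x).continuousAt

lemma tendsto_gaussianPDFReal_zero_one_atTop : Tendsto φ atTop (𝓝 0) := by
  have h_sq : Tendsto (fun x : ℝ => x ^ 2 / 2) atTop atTop :=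
    (tendsto_pow_atTop two_ne_zero).atTop_div_const two_pos
  rw [funext gaussianPDFReal_zero_one]
  simpa using (tendsto_exp_neg_atTop_nhds_zero.comp h_sq).const_mul (√(2 * π))⁻¹

lemma integrable_mul_gaussianPDFReal_zero_one : Integrable (fun x => x * φ x) := by
  have h := (integrable_mul_exp_neg_mul_sq (b := 1 / 2) (by norm_num)).const_mul (√(2 * π))⁻¹
  refine h.congr (ae_of_all _ fun x => ?_)
  simp only [gaussianPDFReal_zero_one]
  ring_nf

lemma integral_Ioi_mul_gaussianPDFReal_zero_one (w : ℝ) : ∫ x in Ioi w, x * φ x = φ w := by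
  have h := integral_Ioi_of_hasDerivAt_of_tendsto' (a := w) (m := -0)
    (fun x _ => (hasDerivAt_gaussianPDFReal_zero_one x).neg)
    (by simpa using integrable_mul_gaussianPDFReal_zero_one.integrableOn)
    tendsto_gaussianPDFReal_zero_one_atTop.neg
  simpa using h

lemma stdNormalCDF_eq_cdf : Φ = cdf (gaussianReal 0 1) :=
  funext fun z => (cdf_eq_real (gaussianReal 0 1) z).symm

lemma stdNormalCDF_nonneg (z : ℝ) : 0 ≤ Φ z := measureReal_nonneg

lemma monotone_stdNormalCDF : Monotone Φ := stdNormalCDF_eq_cdf ▸ monotone_cdf _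

lemma stdNormalCDF_eq_integral (z : ℝ) : Φ z = ∫ x in Iic z, φ x := by
  rw [stdNormalCDF, gaussianReal_apply_eq_integral 0 one_ne_zero, ENNReal.toReal_ofReal]
  exact integral_nonneg fun x => gaussianPDFReal_nonneg 0 1 x

lemma stdNormalCDF_neg_eq_integral (z : ℝ) : Φ (-z) = ∫ x in Ioi z, φ x := by
  rw [stdNormalCDF_eq_integral, ← integral_comp_neg_Ioi]
  simp only [gaussianPDFReal_zero_one_neg]

lemma stdNormalCDF_add_neg (z : ℝ) : Φ z + Φ (-z) = 1 := by
  have h_int := integrable_gaussianPDFReal 0 1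
  rw [stdNormalCDF_eq_integral, stdNormalCDF_neg_eq_integral,
    intervalIntegral.integral_Iic_add_Ioi h_int.integrableOn h_int.integrableOn,
    integral_gaussianPDFReal_eq_one 0 one_ne_zero]

lemma hasDerivAt_stdNormalCDF (z : ℝ) : HasDerivAt Φ (φ z) z := by
  have h_eq (w : ℝ) : Φ w = Φ 0 + ∫ x in (0 : ℝ)..w, φ x := by
    have h_int := integrable_gaussianPDFReal 0 1
    rw [stdNormalCDF_eq_integral, stdNormalCDF_eq_integral,
      ← intervalIntegral.integral_Iic_sub_Iic h_int.integrableOn h_int.integrableOn]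
    ring
  rw [funext h_eq]
  exact (continuous_gaussianPDFReal_zero_one.integral_hasStrictDerivAt 0 z).hasDerivAt.const_add _

lemma hasDerivAt_stdNormalCDF_neg (z : ℝ) : HasDerivAt (fun w => Φ (-w)) (-φ z) z := by
  refine ((hasDerivAt_stdNormalCDF (-z)).comp z (hasDerivAt_neg z)).congr_deriv ?_
  rw [gaussianPDFReal_zero_one_neg, mul_neg_one]

lemma continuous_stdNormalCDF : Continuous Φ :=
  continuous_iff_continuousAt.2 fun z => (hasDerivAt_stdNormalCDF z).continuousAt

lemma two_mul_stdNormalCDF_sub_one_le {w : ℝ} (hw : 0 ≤ w) : 2 * Φ w - 1 ≤ w := by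
  have h_mono : Monotone fun x => x - 2 * Φ x :=
    monotone_of_hasDerivAt_nonneg
      (fun x => (hasDerivAt_id x).sub ((hasDerivAt_stdNormalCDF x).const_mul 2)) fun x => by
        simp only [Pi.zero_apply]
        linarith [gaussianPDFReal_zero_one_le_half x]
  have h_zero : 0 - 2 * Φ 0 ≤ w - 2 * Φ w := h_mono hw
  have h_half := stdNormalCDF_add_neg 0
  rw [neg_zero] at h_half
  linarith

lemma stdNormalCDF_mul_neg_le_gaussianPDFReal (w : ℝ) : Φ w * Φ (-w) ≤ φ w := by
  wlog hw : 0 ≤ w generalizing w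
  · have h := this (-w) (by linarith)
    rwa [neg_neg, gaussianPDFReal_zero_one_neg, mul_comm] at h
  set G : ℝ → ℝ := fun x => φ x - Φ x * Φ (-x)
  have h_deriv (x : ℝ) : HasDerivAt G (φ x * (2 * Φ x - 1 - x)) x := by
    refine ((hasDerivAt_gaussianPDFReal_zero_one x).sub
      ((hasDerivAt_stdNormalCDF x).mul (hasDerivAt_stdNormalCDF_neg x))).congr_deriv ?_
    linear_combination -φ x * stdNormalCDF_add_neg x
  have h_anti : AntitoneOn G (Ici 0) :=
    antitoneOn_of_hasDerivWithinAt_nonpos (convex_Ici 0)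
      (fun x _ => (h_deriv x).continuousAt.continuousWithinAt)
      (fun x _ => (h_deriv x).hasDerivWithinAt) fun x hx =>
        mul_nonpos_of_nonneg_of_nonpos (gaussianPDFReal_zero_one_pos x).le <|
          sub_nonpos.2 (two_mul_stdNormalCDF_sub_one_le (interior_subset hx))
  have h_lim : Tendsto G atTop (𝓝 0) := by
    have h_top : Tendsto Φ atTop (𝓝 1) := stdNormalCDF_eq_cdf ▸ tendsto_cdf_atTop _
    have h_bot : Tendsto Φ atBot (𝓝 0) := stdNormalCDF_eq_cdf ▸ tendsto_cdf_atBot _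
    simpa using tendsto_gaussianPDFReal_zero_one_atTop.sub
      (h_top.mul (h_bot.comp tendsto_neg_atTop_atBot))
  have h_nonneg : 0 ≤ G w := le_of_tendsto h_lim <| (eventually_ge_atTop w).mono
    fun x hx => h_anti hw (hw.trans hx) hx
  exact sub_nonneg.1 h_nonneg

/-- The Mills ratio of the standard normal law: the ratio of its upper tail to its density. -/
noncomputable def mills (w : ℝ) : ℝ := Φ (-w) / φ w

lemma hasDerivAt_mills (w : ℝ) : HasDerivAt mills (w * mills w - 1) w := by
  have h_ne := (gaussianPDFReal_zero_one_pos w).ne'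
  refine ((hasDerivAt_stdNormalCDF_neg w).div (hasDerivAt_gaussianPDFReal_zero_one w)
    h_ne).congr_deriv ?_
  rw [mills]
  field_simp
  ring

lemma integral_Ioi_eq_integral_Ioi_zero_add {E : Type*} [NormedAddCommGroup E] [NormedSpace ℝ E]
    (f : ℝ → E) (w : ℝ) :
    ∫ x in Ioi w, f x = ∫ t in Ioi (0 : ℝ), f (t + w) := by
  have h := (measurePreserving_add_right volume w).setIntegral_preimage_emb
    (measurableEmbedding_addRight w) f (Ioi w)
  rw [preimage_add_const_Ioi, sub_self] at h
  exact h.symm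

lemma integrable_mul_exp_neg_mul_add_sq (w : ℝ) :
    Integrable fun t => t * exp (-(w * t + t ^ 2 / 2)) := by
  have h := ((integrable_mul_gaussianPDFReal_zero_one.comp_add_right w).sub
    (((integrable_gaussianPDFReal 0 1).comp_add_right w).const_mul w)).div_const (φ w)
  refine h.congr (ae_of_all _ fun t => ?_)
  have h_ne := (gaussianPDFReal_zero_one_pos w).ne'
  simp only [Pi.sub_apply, gaussianPDFReal_zero_one_add]
  field_simp
  ring

lemma one_sub_mul_mills_eq_integral (w : ℝ) :
    1 - w * mills w = ∫ t in Ioi (0 : ℝ), t * exp (-(w * t + t ^ 2 / 2)) := by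
  have h_ne := (gaussianPDFReal_zero_one_pos w).ne'
  have h_tail : φ w - w * Φ (-w) = ∫ x in Ioi w, (x - w) * φ x := by
    simp only [sub_mul]
    rw [integral_sub integrable_mul_gaussianPDFReal_zero_one.integrableOn
      ((integrable_gaussianPDFReal 0 1).integrableOn.const_mul w), integral_const_mul,
      integral_Ioi_mul_gaussianPDFReal_zero_one, stdNormalCDF_neg_eq_integral]
  calc 1 - w * mills w = (φ w - w * Φ (-w)) / φ w := by rw [mills]; field_simp
    _ = (φ w * ∫ t in Ioi (0 : ℝ), t * exp (-(w * t + t ^ 2 / 2))) / φ w := by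
        rw [h_tail, integral_Ioi_eq_integral_Ioi_zero_add, ← integral_const_mul]
        simp only [add_sub_cancel_right, gaussianPDFReal_zero_one_add, mul_left_comm]
    _ = _ := mul_div_cancel_left₀ _ h_ne

lemma mul_mills_le_one (w : ℝ) : w * mills w ≤ 1 := by
  rw [← sub_nonneg, one_sub_mul_mills_eq_integral]
  exact setIntegral_nonneg measurableSet_Ioi fun t ht => mul_nonneg (le_of_lt ht) (exp_pos _).le

lemma monotone_mul_mills : Monotone fun w => w * mills w := by
  intro v w hvw
  rw [← sub_le_sub_iff_left 1, one_sub_mul_mills_eq_integral, one_sub_mul_mills_eq_integral]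
  refine setIntegral_mono_on (integrable_mul_exp_neg_mul_add_sq w).integrableOn
    (integrable_mul_exp_neg_mul_add_sq v).integrableOn measurableSet_Ioi fun t ht => ?_
  have ht : 0 ≤ t := le_of_lt ht
  gcongr

/-! ### The trapezoid rule -/

/-- The increments of `g` dominate those of `f` in absolute value. If `f` is the sum of an
increasing `p` and a decreasing `q`, then `g = p - q` has this property. -/
def DominatesVariation (g f : ℝ → ℝ) : Prop :=
  ∀ ⦃x y⦄, x ≤ y → |f y - f x| ≤ g y - g x

namespace DominatesVariation

variable {f g : ℝ → ℝ}

lemma monotone (h : DominatesVariation g f) : Monotone g :=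
  fun _ _ hxy => sub_nonneg.1 ((abs_nonneg _).trans (h hxy))

lemma monotone_sub (h : DominatesVariation g f) : Monotone (g - f) := fun x y hxy => by
  simp only [Pi.sub_apply]
  linarith [(abs_le.1 (h hxy)).2]

lemma measurable (h : DominatesVariation g f) : Measurable f := by
  simpa using h.monotone.measurable.sub h.monotone_sub.measurable

lemma intervalIntegrable (h : DominatesVariation g f) (a b : ℝ) :
    IntervalIntegrable f volume a b := by
  simpa using h.monotone.intervalIntegrable.sub (h.monotone_sub.intervalIntegrable (μ := volume))

end DominatesVariation

section Trapezoid

variable {F F' g : ℝ → ℝ} {s : Set ℝ}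

lemma abs_sub_sub_trapezoid_le (hF : Continuous F) (hs : s.Countable)
    (hF' : ∀ x ∉ s, HasDerivAt F (F' x) x) (hg : DominatesVariation g F') {a b : ℝ} (hab : a ≤ b) :
    |F b - F a - (b - a) * ((F' a + F' b) / 2)| ≤ (b - a) * ((g b - g a) / 2) := by
  have h_ftc : ∫ x in a..b, F' x = F b - F a :=
    integral_eq_of_hasDerivAt_off_countable F F' hs hF.continuousOn (fun x hx => hF' x hx.2)
      (hg.intervalIntegrable a b)
  have h_dev (x : ℝ) (hx : x ∈ uIoc a b) :
      ‖F' x - (F' a + F' b) / 2‖ ≤ (g b - g a) / 2 := by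
    rw [uIoc_of_le hab] at hx
    have h_left := abs_le.1 (hg hx.1.le)
    have h_right := abs_le.1 (hg hx.2)
    rw [Real.norm_eq_abs, abs_le]
    constructor <;> linarith
  have h_int := intervalIntegral.norm_integral_le_of_norm_le_const h_dev
  rwa [intervalIntegral.integral_sub (hg.intervalIntegrable a b) intervalIntegrable_const,
    h_ftc, intervalIntegral.integral_const, smul_eq_mul, Real.norm_eq_abs,
    abs_of_nonneg (sub_nonneg.2 hab), mul_comm _ (b - a)] at h_int

lemma abs_mul_sub_sub_sq_mul_le (hF : Continuous F) (hs : s.Countable)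
    (hF' : ∀ x ∉ s, HasDerivAt F (F' x) x) (hg : DominatesVariation g F') {x y A : ℝ}
    (hA : |x - y| ≤ A) :
    |(x - y) * (F x - F y) - (x - y) ^ 2 * ((F' x + F' y) / 2)|
      ≤ A / 2 * ((x - y) * (g x - g y)) := by
  wlog hyx : y ≤ x generalizing x y
  · have h := this (by rwa [abs_sub_comm]) (le_of_not_ge hyx)
    convert h using 2 <;> ring
  have h_trap := abs_sub_sub_trapezoid_le hF hs hF' hg hyx
  have h_nonneg : 0 ≤ x - y := sub_nonneg.2 hyx
  calc |(x - y) * (F x - F y) - (x - y) ^ 2 * ((F' x + F' y) / 2)|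
      = (x - y) * |F x - F y - (x - y) * ((F' y + F' x) / 2)| := by
        rw [← abs_of_nonneg h_nonneg, ← abs_mul, abs_of_nonneg h_nonneg]
        congr 1
        ring
    _ ≤ A * ((x - y) * ((g x - g y) / 2)) :=
        mul_le_mul ((le_abs_self _).trans hA) h_trap (abs_nonneg _) ((abs_nonneg _).trans hA)
    _ = A / 2 * ((x - y) * (g x - g y)) := by ring

end Trapezoid

/-! ### The Stein equation for half-lines -/

/-- The bounded solution `f` of the Stein equation `f' w - w * f w = 1_{w ≤ z} - Φ z`. Taking the
minimum and maximum of `w` and `z` merges the usual formulas `Φ w * (1 - Φ z) / φ w` for `w ≤ z`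
and `Φ z * (1 - Φ w) / φ w` for `z ≤ w`. -/
noncomputable def steinSol (z w : ℝ) : ℝ := Φ (min w z) * Φ (-max w z) / φ w

/-- The derivative of `steinSol z`, with the value prescribed by the Stein equation at the
kink `z`. -/
noncomputable def steinDeriv (z w : ℝ) : ℝ :=
  w * steinSol z w - Φ z + (Iic z).indicator 1 w

/-- An increasing function whose increments bound those of `steinDeriv z`; see
`dominatesVariation_steinDeriv`. -/
noncomputable def steinOsc (z w : ℝ) : ℝ :=
  w * steinSol z w - Φ z + (Ioi z).indicator 1 w

lemma steinSol_neg_neg (z w : ℝ) : steinSol (-z) (-w) = steinSol z w := by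
  rw [steinSol, steinSol, min_neg_neg, max_neg_neg, neg_neg, gaussianPDFReal_zero_one_neg, mul_comm]

lemma steinSol_of_ge {z w : ℝ} (h : z ≤ w) : steinSol z w = Φ z * mills w := by
  rw [steinSol, mills, min_eq_right h, max_eq_left h, mul_div_assoc]

lemma continuous_steinSol (z : ℝ) : Continuous (steinSol z) := by
  have hΦ := continuous_stdNormalCDF
  refine Continuous.div ?_ continuous_gaussianPDFReal_zero_one
    fun w => (gaussianPDFReal_zero_one_pos w).ne'
  fun_prop

lemma abs_steinSol_le_one (z w : ℝ) : |steinSol z w| ≤ 1 := by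
  have h_nonneg : 0 ≤ steinSol z w := div_nonneg
    (mul_nonneg (stdNormalCDF_nonneg _) (stdNormalCDF_nonneg _)) (gaussianPDFReal_zero_one_pos w).le
  rw [abs_of_nonneg h_nonneg]
  calc steinSol z w ≤ Φ w * Φ (-w) / φ w := by
        have h_min := monotone_stdNormalCDF (min_le_left w z)
        have h_max := monotone_stdNormalCDF (neg_le_neg (le_max_left w z))
        exact div_le_div_of_nonneg_right
          (mul_le_mul h_min h_max (stdNormalCDF_nonneg _) (stdNormalCDF_nonneg _))
          (gaussianPDFReal_zero_one_pos w).le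
    _ ≤ 1 := (div_le_one (gaussianPDFReal_zero_one_pos w)).2
        (stdNormalCDF_mul_neg_le_gaussianPDFReal w)

lemma mul_steinSol_eq_neg (z w : ℝ) : w * steinSol z w = -(-w * steinSol (-z) (-w)) := by
  rw [steinSol_neg_neg]
  ring

lemma monotoneOn_mul_steinSol_Ici (z : ℝ) : MonotoneOn (fun w => w * steinSol z w) (Ici z) := by
  intro v hv w hw hvw
  simp only [steinSol_of_ge (mem_Ici.1 hv), steinSol_of_ge (mem_Ici.1 hw), mul_left_comm _ (Φ z)]
  exact mul_le_mul_of_nonneg_left (monotone_mul_mills hvw) (stdNormalCDF_nonneg z)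

lemma monotone_mul_steinSol (z : ℝ) : Monotone fun w => w * steinSol z w := by
  have h_left : MonotoneOn (fun w => w * steinSol z w) (Iic z) := fun v hv w hw hvw => by
    simp only [mul_steinSol_eq_neg z v, mul_steinSol_eq_neg z w]
    exact neg_le_neg <|
      monotoneOn_mul_steinSol_Ici (-z) (mem_Ici.2 (neg_le_neg (mem_Iic.1 hw)))
        (mem_Ici.2 (neg_le_neg (mem_Iic.1 hv))) (neg_le_neg hvw)
  exact h_left.Iic_union_Ici (monotoneOn_mul_steinSol_Ici z)

lemma mul_steinSol_le (z w : ℝ) : w * steinSol z w ≤ Φ z := by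
  calc w * steinSol z w ≤ max w z * steinSol z (max w z) :=
        monotone_mul_steinSol z (le_max_left w z)
    _ = Φ z * (max w z * mills (max w z)) := by rw [steinSol_of_ge (le_max_right w z)]; ring
    _ ≤ Φ z := mul_le_of_le_one_right (stdNormalCDF_nonneg z) (mul_mills_le_one _)

lemma sub_one_le_mul_steinSol (z w : ℝ) : Φ z - 1 ≤ w * steinSol z w := by
  rw [mul_steinSol_eq_neg]
  linarith [mul_steinSol_le (-z) (-w), stdNormalCDF_add_neg z]

lemma abs_steinDeriv_le_one (z w : ℝ) : |steinDeriv z w| ≤ 1 := by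
  have h_upper := mul_steinSol_le z w
  have h_lower := sub_one_le_mul_steinSol z w
  have h_zero : 0 ≤ (Iic z).indicator (1 : ℝ → ℝ) w := indicator_nonneg (fun _ _ => zero_le_one) w
  have h_one : (Iic z).indicator (1 : ℝ → ℝ) w ≤ 1 :=
    indicator_le_self' (fun _ _ => zero_le_one) w
  rw [steinDeriv, abs_le]
  constructor <;> linarith

lemma abs_steinOsc_le_one (z w : ℝ) : |steinOsc z w| ≤ 1 := by
  have h_upper := mul_steinSol_le z w
  have h_lower := sub_one_le_mul_steinSol z w
  have h_zero : 0 ≤ (Ioi z).indicator (1 : ℝ → ℝ) w := indicator_nonneg (fun _ _ => zero_le_one) w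
  have h_one : (Ioi z).indicator (1 : ℝ → ℝ) w ≤ 1 :=
    indicator_le_self' (fun _ _ => zero_le_one) w
  rw [steinOsc, abs_le]
  constructor <;> linarith

lemma hasDerivAt_steinSol_of_gt {z w : ℝ} (h : z < w) :
    HasDerivAt (steinSol z) (w * steinSol z w - Φ z) w := by
  rw [steinSol_of_ge h.le]
  refine (((hasDerivAt_mills w).const_mul (Φ z)).congr_deriv (by ring)).congr_of_eventuallyEq ?_
  filter_upwards [eventually_gt_nhds h] with x hx using steinSol_of_ge hx.le

lemma hasDerivAt_steinSol {z w : ℝ} (h : w ≠ z) :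
    HasDerivAt (steinSol z) (steinDeriv z w) w := by
  rcases h.lt_or_gt with h | h
  · have h_reflect := (hasDerivAt_steinSol_of_gt (neg_lt_neg h)).comp w (hasDerivAt_neg w)
    rw [show steinSol (-z) ∘ Neg.neg = steinSol z from funext (steinSol_neg_neg z)] at h_reflect
    refine h_reflect.congr_deriv ?_
    rw [steinDeriv, steinSol_neg_neg, indicator_of_mem (mem_Iic.2 h.le), Pi.one_apply]
    linear_combination stdNormalCDF_add_neg z
  · simpa [steinDeriv, h.not_ge] using hasDerivAt_steinSol_of_gt h

lemma dominatesVariation_steinDeriv (z : ℝ) :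
    DominatesVariation (steinOsc z) (steinDeriv z) := by
  intro x y hxy
  have h_mono := monotone_mul_steinSol z hxy
  have h_anti : (Iic z).indicator (1 : ℝ → ℝ) y ≤ (Iic z).indicator 1 x :=
    indicator_apply_le' (fun hy => by rw [indicator_of_mem (mem_Iic.2 (hxy.trans hy))]; rfl)
      fun _ => indicator_nonneg (fun _ _ => zero_le_one) x
  have h_compl (w : ℝ) : (Ioi z).indicator (1 : ℝ → ℝ) w = 1 - (Iic z).indicator 1 w := by
    rw [← compl_Iic, indicator_compl, Pi.sub_apply, Pi.one_apply]
  simp only [steinDeriv, steinOsc, h_compl, abs_le]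
  constructor <;> linarith

lemma measureReal_le_sub_stdNormalCDF_eq {Ω : Type*} {mΩ : MeasurableSpace Ω} {μ : Measure Ω}
    [IsProbabilityMeasure μ] {W : Ω → ℝ} (hW : Measurable W) (hW_int : Integrable W μ) (z : ℝ) :
    μ.real {ω | W ω ≤ z} - Φ z
      = ∫ ω, steinDeriv z (W ω) ∂μ - ∫ ω, steinSol z (W ω) * W ω ∂μ := by
  have h_sol_int : Integrable (fun ω => steinSol z (W ω) * W ω) μ :=
    hW_int.bdd_mul ((continuous_steinSol z).measurable.comp hW).aestronglyMeasurable
      (ae_of_all _ fun ω => abs_steinSol_le_one z (W ω))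
  have h_deriv_int : Integrable (fun ω => steinDeriv z (W ω)) μ :=
    .of_bound ((dominatesVariation_steinDeriv z).measurable.comp hW).aestronglyMeasurable 1
      (ae_of_all _ fun ω => abs_steinDeriv_le_one z (W ω))
  have h_set : MeasurableSet {ω | W ω ≤ z} := hW measurableSet_Iic
  calc μ.real {ω | W ω ≤ z} - Φ z
      = ∫ ω, ({ω | W ω ≤ z}.indicator 1 ω - Φ z) ∂μ := by
        rw [integral_sub ((integrable_const 1).indicator h_set) (integrable_const _),
          integral_indicator_one h_set, integral_const, probReal_univ, one_smul]
    _ = ∫ ω, (steinDeriv z (W ω) - steinSol z (W ω) * W ω) ∂μ := by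
        congr with ω
        have h_ind : {ω | W ω ≤ z}.indicator (1 : Ω → ℝ) ω = (Iic z).indicator 1 (W ω) := rfl
        rw [h_ind, steinDeriv]
        ring
    _ = _ := integral_sub h_deriv_int h_sol_int

/-! ### Exchangeable pairs -/

section Symmetrization

variable {Ω E : Type*} {mΩ : MeasurableSpace Ω} [MeasurableSpace E] {μ : Measure Ω} {X Y : Ω → E}
  {F : E → E → ℝ}

lemma integrable_add_swap (hexch : IdentDistrib (fun ω => (X ω, Y ω)) (fun ω => (Y ω, X ω)) μ μ)
    (hF : Measurable F.uncurry) (hint : Integrable (fun ω => F (X ω) (Y ω)) μ) :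
    Integrable (fun ω => F (X ω) (Y ω) + F (Y ω) (X ω)) μ :=
  hint.add ((hexch.comp hF).integrable_iff.1 hint)

lemma integral_add_swap (hexch : IdentDistrib (fun ω => (X ω, Y ω)) (fun ω => (Y ω, X ω)) μ μ)
    (hF : Measurable F.uncurry) (hint : Integrable (fun ω => F (X ω) (Y ω)) μ) :
    ∫ ω, (F (X ω) (Y ω) + F (Y ω) (X ω)) ∂μ = 2 * ∫ ω, F (X ω) (Y ω) ∂μ := by
  have h_swap : IdentDistrib (fun ω => F (X ω) (Y ω)) (fun ω => F (Y ω) (X ω)) μ μ :=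
    hexch.comp hF
  rw [integral_add hint (h_swap.integrable_iff.1 hint), ← h_swap.integral_eq, two_mul]

end Symmetrization

section CondExp

variable {Ω : Type*} {m mΩ : MeasurableSpace Ω} {μ : Measure Ω} {Y Z : Ω → ℝ} {C : ℝ}

lemma integral_mul_condExp [IsFiniteMeasure μ] (hm : m ≤ mΩ) (hY : StronglyMeasurable[m] Y)
    (hYZ : Integrable (fun ω => Y ω * Z ω) μ) (hZ : Integrable Z μ) :
    ∫ ω, Y ω * μ[Z | m] ω ∂μ = ∫ ω, Y ω * Z ω ∂μ := by
  rw [← integral_condExp hm (f := fun ω => Y ω * Z ω)]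
  exact integral_congr_ae (condExp_mul_of_stronglyMeasurable_left hY hYZ hZ).symm

lemma abs_integral_mul_le (hY : ∀ ω, |Y ω| ≤ C) (hZ : Integrable Z μ) :
    |∫ ω, Y ω * Z ω ∂μ| ≤ C * ∫ ω, |Z ω| ∂μ := by
  rw [← integral_const_mul, ← norm_eq_abs]
  refine norm_integral_le_of_norm_le (hZ.abs.const_mul C) (ae_of_all _ fun ω => ?_)
  rw [norm_eq_abs, abs_mul]
  exact mul_le_mul_of_nonneg_right (hY ω) (abs_nonneg _)

lemma abs_integral_sub_integral_mul_le [IsFiniteMeasure μ] (hm : m ≤ mΩ)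
    (hY : StronglyMeasurable[m] Y) (hYC : ∀ ω, |Y ω| ≤ C) (hZ : Integrable Z μ) (c : ℝ) :
    |∫ ω, Y ω ∂μ - c * ∫ ω, Y ω * Z ω ∂μ| ≤ C * ∫ ω, |1 - c * μ[Z | m] ω| ∂μ := by
  have hY_meas : AEStronglyMeasurable Y μ := (hY.mono hm).aestronglyMeasurable
  have hY_int : Integrable Y μ := .of_bound hY_meas C (ae_of_all _ hYC)
  have h_eq : ∫ ω, Y ω ∂μ - c * ∫ ω, Y ω * Z ω ∂μ = ∫ ω, Y ω * (1 - c * μ[Z | m] ω) ∂μ := by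
    rw [← integral_mul_condExp hm hY (hZ.bdd_mul hY_meas (ae_of_all _ hYC)) hZ,
      ← integral_const_mul, ← integral_sub hY_int
        ((integrable_condExp.bdd_mul hY_meas (ae_of_all _ hYC)).const_mul c)]
    congr with ω
    ring
  rw [h_eq]
  exact abs_integral_mul_le hYC ((integrable_const 1).sub (integrable_condExp.const_mul c))

end CondExp

section ExchangeablePair

variable {Ω : Type*} {m mΩ : MeasurableSpace Ω} {μ : Measure Ω} {W W' R : Ω → ℝ}
  {f f' g : ℝ → ℝ} {s : Set ℝ} {A lam : ℝ}

lemma abs_two_mul_integral_sub_integral_sq_le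
    (hexch : IdentDistrib (fun ω => (W ω, W' ω)) (fun ω => (W' ω, W ω)) μ μ)
    (hbdd : ∀ᵐ ω ∂μ, |W ω - W' ω| ≤ A) (hf : Continuous f) (hs : s.Countable)
    (hf' : ∀ x ∉ s, HasDerivAt f (f' x) x) (hg : DominatesVariation g f')
    (hf_int : Integrable (fun ω => f (W ω) * (W ω - W' ω)) μ)
    (hf'_int : Integrable (fun ω => f' (W ω) * (W ω - W' ω) ^ 2) μ)
    (hg_int : Integrable (fun ω => g (W ω) * (W ω - W' ω)) μ) :
    |2 * ∫ ω, f (W ω) * (W ω - W' ω) ∂μ - ∫ ω, f' (W ω) * (W ω - W' ω) ^ 2 ∂μ|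
      ≤ A * ∫ ω, g (W ω) * (W ω - W' ω) ∂μ := by
  set H : ℝ → ℝ → ℝ := fun x y => f x * (x - y) - f' x * (x - y) ^ 2 / 2
  set G : ℝ → ℝ → ℝ := fun x y => g x * (x - y)
  have hf'_meas := hg.measurable
  have hg_meas := hg.monotone.measurable
  have hH_meas : Measurable H.uncurry := by unfold H Function.uncurry; fun_prop
  have hG_meas : Measurable G.uncurry := by unfold G Function.uncurry; fun_prop
  have h_error (x y : ℝ) (hxy : |x - y| ≤ A) : ‖H x y + H y x‖ ≤ A / 2 * (G x y + G y x) := by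
    have hH : H x y + H y x
        = (x - y) * (f x - f y) - (x - y) ^ 2 * ((f' x + f' y) / 2) := by simp only [H]; ring
    have hG : G x y + G y x = (x - y) * (g x - g y) := by simp only [G]; ring
    rw [hH, hG, norm_eq_abs]
    exact abs_mul_sub_sub_sq_mul_le hf hs hf' hg hxy
  calc |2 * ∫ ω, f (W ω) * (W ω - W' ω) ∂μ - ∫ ω, f' (W ω) * (W ω - W' ω) ^ 2 ∂μ|
      = ‖∫ ω, (H (W ω) (W' ω) + H (W' ω) (W ω)) ∂μ‖ := by
        rw [integral_add_swap hexch hH_meas (hf_int.sub (hf'_int.div_const 2)),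
          integral_sub hf_int (hf'_int.div_const 2), integral_div, norm_eq_abs]
        ring_nf
    _ ≤ ∫ ω, A / 2 * (G (W ω) (W' ω) + G (W' ω) (W ω)) ∂μ :=
        norm_integral_le_of_norm_le ((integrable_add_swap hexch hG_meas hg_int).const_mul _)
          (hbdd.mono fun ω hω => h_error _ _ hω)
    _ = A * ∫ ω, g (W ω) * (W ω - W' ω) ∂μ := by
        rw [integral_const_mul, integral_add_swap hexch hG_meas hg_int]
        ring

lemma integral_mul_sub_eq_of_regression [IsFiniteMeasure μ] (hm : m ≤ mΩ) {Y : Ω → ℝ} {C : ℝ}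
    (hY : StronglyMeasurable[m] Y) (hYC : ∀ ω, |Y ω| ≤ C)
    (hΔ : Integrable (fun ω => W ω - W' ω) μ) (hW : Integrable W μ) (hR : Integrable R μ)
    (hreg : μ[fun ω => W ω - W' ω | m] =ᵐ[μ] fun ω => lam * W ω + R ω) :
    ∫ ω, Y ω * (W ω - W' ω) ∂μ = lam * ∫ ω, Y ω * W ω ∂μ + ∫ ω, Y ω * R ω ∂μ := by
  have hY_mul {Z : Ω → ℝ} (hZ : Integrable Z μ) : Integrable (fun ω => Y ω * Z ω) μ :=
    hZ.bdd_mul (hY.mono hm).aestronglyMeasurable (ae_of_all _ hYC)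
  calc ∫ ω, Y ω * (W ω - W' ω) ∂μ = ∫ ω, Y ω * μ[fun ω => W ω - W' ω | m] ω ∂μ :=
        (integral_mul_condExp hm hY (hY_mul hΔ) hΔ).symm
    _ = ∫ ω, (lam * (Y ω * W ω) + Y ω * R ω) ∂μ :=
        integral_congr_ae (hreg.mono fun ω hω => by simp only [hω]; ring)
    _ = lam * ∫ ω, Y ω * W ω ∂μ + ∫ ω, Y ω * R ω ∂μ := by
        rw [integral_add ((hY_mul hW).const_mul lam) (hY_mul hR), integral_const_mul]

lemma abs_integral_mul_sub_le_of_regression [IsFiniteMeasure μ] (hm : m ≤ mΩ) {Y : Ω → ℝ} {C : ℝ}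
    (hY : StronglyMeasurable[m] Y) (hYC : ∀ ω, |Y ω| ≤ C)
    (hΔ : Integrable (fun ω => W ω - W' ω) μ) (hW : Integrable W μ) (hR : Integrable R μ)
    (hlam : 0 ≤ lam) (hreg : μ[fun ω => W ω - W' ω | m] =ᵐ[μ] fun ω => lam * W ω + R ω) :
    |∫ ω, Y ω * (W ω - W' ω) ∂μ| ≤ C * (lam * ∫ ω, |W ω| ∂μ + ∫ ω, |R ω| ∂μ) := by
  rw [integral_mul_sub_eq_of_regression hm hY hYC hΔ hW hR hreg]
  calc |lam * ∫ ω, Y ω * W ω ∂μ + ∫ ω, Y ω * R ω ∂μ|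
      ≤ lam * |∫ ω, Y ω * W ω ∂μ| + |∫ ω, Y ω * R ω ∂μ| :=
        (abs_add_le _ _).trans_eq (by rw [abs_mul, abs_of_nonneg hlam])
    _ ≤ lam * (C * ∫ ω, |W ω| ∂μ) + C * ∫ ω, |R ω| ∂μ := by
        gcongr
        exacts [abs_integral_mul_le hYC hW, abs_integral_mul_le hYC hR]
    _ = C * (lam * ∫ ω, |W ω| ∂μ + ∫ ω, |R ω| ∂μ) := by ring

lemma abs_sub_le_of_eq_mul_add {a b D Q r : ℝ} (hlam : 0 < lam) (hD : D = lam * b + r) :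
    |a - b| ≤ |a - 1 / (2 * lam) * Q| + |r| / lam + |2 * D - Q| / (2 * lam) := by
  have h_eq : a - b = (a - 1 / (2 * lam) * Q) + r / lam - (2 * D - Q) / (2 * lam) := by
    rw [hD]
    field_simp
    ring
  have h_lam : |r / lam| = |r| / lam := by rw [abs_div, abs_of_pos hlam]
  have h_two_lam : |(2 * D - Q) / (2 * lam)| = |2 * D - Q| / (2 * lam) := by
    rw [abs_div, abs_of_pos (by positivity : 0 < 2 * lam)]
  rw [h_eq, ← h_lam, ← h_two_lam]
  exact (abs_sub _ _).trans (add_le_add_left (abs_add_le _ _) _)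

theorem abs_integral_deriv_sub_integral_mul_le [IsProbabilityMeasure μ] (hm : m ≤ mΩ)
    (hW : Measurable[m] W)
    (hexch : IdentDistrib (fun ω => (W ω, W' ω)) (fun ω => (W' ω, W ω)) μ μ) (hlam : 0 < lam)
    (hreg : μ[fun ω => W ω - W' ω | m] =ᵐ[μ] fun ω => lam * W ω + R ω)
    (hbdd : ∀ᵐ ω ∂μ, |W ω - W' ω| ≤ A) (hW_int : Integrable W μ) (hR_int : Integrable R μ)
    {C₀ C₁ C₂ : ℝ} (hf : Continuous f) (hs : s.Countable) (hf' : ∀ x ∉ s, HasDerivAt f (f' x) x)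
    (hg : DominatesVariation g f') (hC₀ : ∀ x, |f x| ≤ C₀) (hC₁ : ∀ x, |f' x| ≤ C₁)
    (hC₂ : ∀ x, |g x| ≤ C₂) :
    |∫ ω, f' (W ω) ∂μ - ∫ ω, f (W ω) * W ω ∂μ|
      ≤ C₁ * ∫ ω, |1 - (1 / (2 * lam)) * μ[fun ω => (W ω - W' ω) ^ 2 | m] ω| ∂μ
        + C₀ * ((∫ ω, |R ω| ∂μ) / lam)
        + A / 2 * (C₂ * (∫ ω, |W ω| ∂μ + (∫ ω, |R ω| ∂μ) / lam)) := by
  have hA : 0 ≤ A := hbdd.exists.elim fun ω hω => (abs_nonneg _).trans hω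
  have hΔ : MemLp (fun ω => W ω - W' ω) 2 μ :=
    .of_bound ((measurable_fst.sub measurable_snd).comp_aemeasurable
      hexch.aemeasurable_fst).aestronglyMeasurable A hbdd
  have hΔ_int : Integrable (fun ω => W ω - W' ω) μ := hΔ.integrable one_le_two
  have h_comp {u : ℝ → ℝ} (hu : Measurable u) : StronglyMeasurable[m] fun ω => u (W ω) :=
    (hu.comp hW).stronglyMeasurable
  have hf_comp := h_comp hf.measurable
  have hf'_comp := h_comp hg.measurable
  have hg_comp := h_comp hg.monotone.measurable
  have h_int {u : ℝ → ℝ} {C : ℝ} (hu : StronglyMeasurable[m] fun ω => u (W ω))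
      (hC : ∀ x, |u x| ≤ C) {Y : Ω → ℝ} (hY : Integrable Y μ) :
      Integrable (fun ω => u (W ω) * Y ω) μ :=
    hY.bdd_mul (hu.mono hm).aestronglyMeasurable (ae_of_all _ fun ω => hC (W ω))
  have h_variance := abs_integral_sub_integral_mul_le hm hf'_comp (fun ω => hC₁ (W ω))
    hΔ.integrable_sq (1 / (2 * lam))
  have h_trapezoid := abs_two_mul_integral_sub_integral_sq_le hexch hbdd hf hs hf' hg
    (h_int hf_comp hC₀ hΔ_int) (h_int hf'_comp hC₁ hΔ.integrable_sq) (h_int hg_comp hC₂ hΔ_int)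
  have h_osc := le_of_abs_le <| abs_integral_mul_sub_le_of_regression hm hg_comp
    (fun ω => hC₂ (W ω)) hΔ_int hW_int hR_int hlam.le hreg
  have h_reg := integral_mul_sub_eq_of_regression hm hf_comp (fun ω => hC₀ (W ω)) hΔ_int
    hW_int hR_int hreg
  have h_remainder := abs_integral_mul_le (μ := μ) (fun ω => hC₀ (W ω)) hR_int
  calc |∫ ω, f' (W ω) ∂μ - ∫ ω, f (W ω) * W ω ∂μ|
      ≤ |∫ ω, f' (W ω) ∂μ - 1 / (2 * lam) * ∫ ω, f' (W ω) * (W ω - W' ω) ^ 2 ∂μ|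
        + |∫ ω, f (W ω) * R ω ∂μ| / lam
        + |2 * ∫ ω, f (W ω) * (W ω - W' ω) ∂μ - ∫ ω, f' (W ω) * (W ω - W' ω) ^ 2 ∂μ|
          / (2 * lam) := abs_sub_le_of_eq_mul_add hlam h_reg
    _ ≤ C₁ * ∫ ω, |1 - 1 / (2 * lam) * μ[fun ω => (W ω - W' ω) ^ 2 | m] ω| ∂μ
        + C₀ * (∫ ω, |R ω| ∂μ) / lam
        + A * (C₂ * (lam * ∫ ω, |W ω| ∂μ + ∫ ω, |R ω| ∂μ)) / (2 * lam) := by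
        gcongr
        exact h_trapezoid.trans (mul_le_mul_of_nonneg_left h_osc hA)
    _ = _ := by
        rw [mul_div_assoc C₀]
        congr 1
        field_simp

end ExchangeablePair

end SteinMethod

open SteinMethod

theorem stmt_1_general {Ω : Type*} {m mΩ : MeasurableSpace Ω} {μ : Measure Ω}
    [IsProbabilityMeasure μ] {W W' R : Ω → ℝ} {lam A : ℝ} (hm : m ≤ mΩ) (hW : Measurable[m] W)
    (hexch : IdentDistrib (fun ω => (W ω, W' ω)) (fun ω => (W' ω, W ω)) μ μ) (hlam : 0 < lam)
    (hreg : μ[fun ω => W ω - W' ω | m] =ᵐ[μ] fun ω => lam * W ω + R ω)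
    (hbdd : ∀ᵐ ω ∂μ, |W ω - W' ω| ≤ A) (hW_int : Integrable W μ) (z : ℝ) :
    |μ.real {ω | W ω ≤ z} - stdNormalCDF z|
      ≤ (∫ ω, |1 - (1 / (2 * lam)) * μ[fun ω => (W ω - W' ω) ^ 2 | m] ω| ∂μ)
        + (∫ ω, |R ω| ∂μ) / lam + (∫ ω, |W ω| ∂μ + 1) / 2 * A := by
  have hA : 0 ≤ A := hbdd.exists.elim fun ω hω => (abs_nonneg _).trans hω
  have hR_int : Integrable R μ := by
    refine ((integrable_condExp.congr hreg).sub (hW_int.const_mul lam)).congr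
      (ae_of_all _ fun ω => ?_)
    simp only [Pi.sub_apply, add_sub_cancel_left]
  have hE_nonneg (Y : Ω → ℝ) : 0 ≤ ∫ ω, |Y ω| ∂μ := integral_nonneg fun ω => abs_nonneg _
  have hV := hE_nonneg fun ω => 1 - (1 / (2 * lam)) * μ[fun ω => (W ω - W' ω) ^ 2 | m] ω
  have hWA := mul_nonneg (hE_nonneg W) hA
  rcases le_or_gt 1 ((∫ ω, |R ω| ∂μ) / lam) with hR | hR
  · have h_trivial : |μ.real {ω | W ω ≤ z} - stdNormalCDF z| ≤ 1 :=
      abs_sub_le_of_nonneg_of_le measureReal_nonneg measureReal_le_one measureReal_nonneg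
        measureReal_le_one
    linarith
  · have h_stein := abs_integral_deriv_sub_integral_mul_le hm hW hexch hlam hreg hbdd hW_int hR_int
      (continuous_steinSol z) (countable_singleton z) (fun w hw => hasDerivAt_steinSol hw)
      (dominatesVariation_steinDeriv z) (abs_steinSol_le_one z) (abs_steinDeriv_le_one z)
      (abs_steinOsc_le_one z)
    have h_remainder := mul_le_of_le_one_right hA hR.le
    rw [measureReal_le_sub_stdNormalCDF_eq (hW.mono hm le_rfl) hW_int]
    linarith

/-- Shao–Zhang Berry–Esseen bound: if `(W, W')` is an exchangeable pair with
`E(W − W' | W) = λ W + R`, `|W − W'| ≤ A` a.s. and `E|W| ≤ 2`, then with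
`Δ = W − W'` the Kolmogorov distance of `W` to the standard normal is bounded by
`E|1 − (1/(2λ)) E(Δ²|W)| + E|R|/λ + 3 A`. -/
theorem stmt_1
    {Ω : Type*} [MeasurableSpace Ω] (μ : Measure Ω) [IsProbabilityMeasure μ]
    (W W' : Ω → ℝ) (hWmeas : Measurable W) (hW'meas : Measurable W')
    (hexch : μ.map (fun ω => (W ω, W' ω)) = μ.map (fun ω => (W' ω, W ω)))
    (lam : ℝ) (hlam0 : 0 < lam) (hlam1 : lam < 1)
    (R : Ω → ℝ)
    (hRmeas : Measurable[MeasurableSpace.comap W Real.measurableSpace] R)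
    (hRint : Integrable R μ)
    (hreg : (μ[fun ω => W ω - W' ω | MeasurableSpace.comap W Real.measurableSpace])
        =ᵐ[μ] fun ω => lam * W ω + R ω)
    (A : ℝ) (hA : 0 < A)
    (hbdd : ∀ᵐ ω ∂μ, |W ω - W' ω| ≤ A)
    (hWint : Integrable W μ) (hW1le : (∫ ω, |W ω| ∂μ) ≤ 2) :
    ∀ z : ℝ,
      |(μ {ω | W ω ≤ z}).toReal - stdNormalCDF z| ≤
        (∫ ω, |1 - (1 / (2 * lam)) *
            (μ[fun ω => (W ω - W' ω) ^ 2 |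
              MeasurableSpace.comap W Real.measurableSpace]) ω| ∂μ)
        + (∫ ω, |R ω| ∂μ) / lam + 3 * A := by
  intro z
  have h_exch : IdentDistrib (fun ω => (W ω, W' ω)) (fun ω => (W' ω, W ω)) μ μ :=
    ⟨(hWmeas.prodMk hW'meas).aemeasurable, (hW'meas.prodMk hWmeas).aemeasurable, hexch⟩
  refine (stmt_1_general hWmeas.comap_le (comap_measurable W) h_exch hlam0 hreg hbdd hWint
    z).trans ?_
  gcongr
  linarith
end

section
/- For every K > 0 and J ∈ ℝ, the magnetization per particle m_n satisfies, under the measures P_{n,K,J}, a large deviation principle on [−1,1] with speed n and rate function I_{K,J}(m) = I(m) − (K/3)·m³ − (J/2)·m² − inf_{y ∈ [−1,1]} { I(y) − (K/3)·y³ − (J/2)·y² }; that is, for every closed set F ⊆ [−1,1], limsup_{n→∞} (1/n)·log P_{n,K,J}(m_n ∈ F) ≤ −inf_{m ∈ F} I_{K,J}(m), and for every open set G ⊆ [−1,1], liminf_{n→∞} (1/n)·log P_{n,K,J}(m_n ∈ G) ≥ −inf_{m ∈ G} I_{K,J}(m). -/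
/-!
The argument is the method of types. A configuration of `n` spins with `k` of them up has
magnetization `m = 2k/n - 1`, and there are `n.choose k` of them, which is `exp (n * H(k/n))` up to
a factor `n + 1` with `H` the binary entropy: in the expansion of `(k + l) ^ (k + l)` the term
`(k + l).choose k * (k ^ k * l ^ l)` is the largest of `k + l + 1`. Since `I(m) = -H(k/n)`, the
level `m` has Gibbs weight `exp (-n * (I(m) - g(m)))` up to a factor `n + 1`, where `g` is the
interaction. There are at most `n + 1` levels in a set, so its weight grows exponentially at the
rate of its best level; the levels become dense in `[-1, 1]`, so continuity of `I - g` bounds the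
weight of a neighbourhood from below. The same bounds for the whole space give the growth rate of
the partition function, hence the normalization of the rate function.
-/

open MeasureTheory ProbabilityTheory Real Filter

noncomputable section

/-- The spin value `±1` associated with a Boolean. -/
def spin (b : Bool) : ℝ := if b then 1 else -1

/-- Total magnetization `S_n(x) = ∑ i, x_i`. -/
def totalMag (n : ℕ) (x : Fin n → Bool) : ℝ := ∑ i, spin (x i)

/-- Magnetization per particle `m_n(x) = S_n(x)/n`. -/
def magPP (n : ℕ) (x : Fin n → Bool) : ℝ := totalMag n x / n

/-- Boltzmann–Gibbs weight of a configuration in the cubic Curie–Weiss model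
(the reference factor `2^{-n}` is constant and cancels upon normalization). -/
def cubicWeight (n : ℕ) (K J : ℝ) (x : Fin n → Bool) : ℝ :=
  Real.exp (n * (K / 3 * (magPP n x) ^ 3 + J / 2 * (magPP n x) ^ 2))

/-- The cubic Curie–Weiss Boltzmann–Gibbs probability measure `P_{n,K,J}`. -/
def cubicMeasure (n : ℕ) (K J : ℝ) : Measure (Fin n → Bool) :=
  (∑ x : Fin n → Bool, ENNReal.ofReal (cubicWeight n K J x))⁻¹ •
    ∑ x : Fin n → Bool, ENNReal.ofReal (cubicWeight n K J x) • Measure.dirac x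

/-- The binary relative entropy `I(m)`. -/
def binEnt (m : ℝ) : ℝ :=
  (1 - m) / 2 * Real.log ((1 - m) / 2) + (1 + m) / 2 * Real.log ((1 + m) / 2)

/-- The function `φ_{K,J}(x) = I(x) − (K/3)x³ − (J/2)x²`. -/
def phiKJ (K J : ℝ) (x : ℝ) : ℝ := binEnt x - K / 3 * x ^ 3 - J / 2 * x ^ 2

/-- The large deviations rate function
`I_{K,J}(m) = I(m) − (K/3)m³ − (J/2)m² − inf_{y ∈ [−1,1]} (I(y) − (K/3)y³ − (J/2)y²)`. -/
def rateKJ (K J : ℝ) (m : ℝ) : ℝ :=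
  phiKJ K J m - sInf (phiKJ K J '' Set.Icc (-1) 1)

end

open ExpGrowth
open scoped ENNReal Topology

noncomputable section

/-! ### Entropy bounds for binomial coefficients -/

lemma factorial_mul_pow_le_factorial_mul_pow (k j : ℕ) :
    k.factorial * k ^ j ≤ j.factorial * k ^ k := by
  rcases le_total k j with hkj | hjk
  · calc k.factorial * k ^ j = k.factorial * k ^ (j - k) * k ^ k := by
          rw [mul_assoc, ← pow_add, Nat.sub_add_cancel hkj]
      _ ≤ j.factorial * k ^ k := by
          gcongr
          exact Nat.factorial_mul_pow_sub_le_factorial hkj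
  · calc k.factorial * k ^ j = j.factorial * k.descFactorial (k - j) * k ^ j := by
          rw [← Nat.factorial_mul_descFactorial (Nat.sub_le k j), Nat.sub_sub_self hjk]
      _ ≤ j.factorial * k ^ (k - j) * k ^ j := by
          gcongr
          exact Nat.descFactorial_le_pow k (k - j)
      _ = j.factorial * k ^ k := by rw [mul_assoc, ← pow_add, Nat.sub_add_cancel hjk]

lemma choose_mul_pow_mul_pow_le_choose_mul_pow_mul_pow {i j k l : ℕ} (h : i + j = k + l) :
    (i + j).choose i * (k ^ i * l ^ j) ≤ (k + l).choose k * (k ^ k * l ^ l) := by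
  have hk := factorial_mul_pow_le_factorial_mul_pow k i
  have hl := factorial_mul_pow_le_factorial_mul_pow l j
  have hpos : 0 < k.factorial * l.factorial * (i.factorial * j.factorial) := by positivity
  refine Nat.le_of_mul_le_mul_left ?_ hpos
  calc k.factorial * l.factorial * (i.factorial * j.factorial) *
          ((i + j).choose i * (k ^ i * l ^ j))
      = (i + j).choose i * i.factorial * j.factorial *
          (k.factorial * k ^ i * (l.factorial * l ^ j)) := by ring
    _ ≤ (i + j).choose i * i.factorial * j.factorial *
          (i.factorial * k ^ k * (j.factorial * l ^ l)) := by gcongr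
    _ = (k + l).choose k * k.factorial * l.factorial *
          (i.factorial * k ^ k * (j.factorial * l ^ l)) := by
        rw [Nat.choose_symm_add, Nat.add_choose_mul_factorial_mul_factorial, h,
          Nat.choose_symm_add, Nat.add_choose_mul_factorial_mul_factorial]
    _ = k.factorial * l.factorial * (i.factorial * j.factorial) *
          ((k + l).choose k * (k ^ k * l ^ l)) := by ring

lemma choose_mul_pow_mul_pow_le_add_pow {R : Type*} [CommSemiring R] [PartialOrder R]
    [IsOrderedRing R] {x y : R} (hx : 0 ≤ x) (hy : 0 ≤ y) (k l : ℕ) :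
    ((k + l).choose k : R) * (x ^ k * y ^ l) ≤ (x + y) ^ (k + l) := by
  rw [(Commute.all x y).add_pow' (k + l), ← nsmul_eq_mul]
  exact Finset.single_le_sum
    (f := fun p : ℕ × ℕ => (k + l).choose p.1 • (x ^ p.1 * y ^ p.2)) (a := (k, l))
    (fun p _ => by positivity) (Finset.HasAntidiagonal.mem_antidiagonal.2 rfl)

lemma add_pow_le_succ_mul_choose_mul_pow_mul_pow (k l : ℕ) :
    (k + l) ^ (k + l) ≤ (k + l + 1) * ((k + l).choose k * (k ^ k * l ^ l)) := by
  rw [(Commute.all k l).add_pow' (k + l), ← Finset.Nat.card_antidiagonal (k + l), ← smul_eq_mul]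
  refine Finset.sum_le_card_nsmul _ _ _ fun p hp => ?_
  have hp : p.1 + p.2 = k + l := Finset.HasAntidiagonal.mem_antidiagonal.1 hp
  simpa only [hp, smul_eq_mul] using choose_mul_pow_mul_pow_le_choose_mul_pow_mul_pow hp

lemma exp_mul_binEntropy_mul_pow_mul_pow (k l : ℕ) :
    exp ((k + l : ℕ) * binEntropy (k / (k + l : ℕ))) * (k ^ k * l ^ l) = (k + l : ℕ) ^ (k + l) := by
  rcases k.eq_zero_or_pos with rfl | hk
  · simp
  rcases l.eq_zero_or_pos with rfl | hl
  · simp [hk.ne']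
  have hn : (0:ℝ) < (k + l : ℕ) := by positivity
  have hcompl : 1 - (k / (k + l : ℕ) : ℝ) = l / (k + l : ℕ) := by
    rw [one_sub_div hn.ne']; push_cast; ring
  have hexp (m : ℕ) (hm : 0 < m) :
      exp ((k + l : ℕ) * (m / (k + l : ℕ) * log (m / (k + l : ℕ))⁻¹)) = ((k + l : ℕ) / m) ^ m := by
    rw [← mul_assoc, mul_div_cancel₀ _ hn.ne', inv_div, Real.exp_nat_mul, exp_log (by positivity)]
  rw [binEntropy, hcompl, mul_add, Real.exp_add, hexp k hk, hexp l hl, pow_add, div_pow, div_pow]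
  field_simp

lemma choose_le_exp_mul_binEntropy {n k : ℕ} (hk : k ≤ n) :
    (n.choose k : ℝ) ≤ exp (n * binEntropy (k / n)) := by
  obtain ⟨l, rfl⟩ := Nat.exists_eq_add_of_le hk
  have hpos : (0 : ℝ) < k ^ k * l ^ l := by
    exact_mod_cast mul_pos Nat.pow_self_pos Nat.pow_self_pos
  refine le_of_mul_le_mul_right ?_ hpos
  rw [exp_mul_binEntropy_mul_pow_mul_pow]
  exact_mod_cast choose_mul_pow_mul_pow_le_add_pow (Nat.zero_le k) (Nat.zero_le l) k l

lemma exp_mul_binEntropy_le_succ_mul_choose {n k : ℕ} (hk : k ≤ n) :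
    exp (n * binEntropy (k / n)) ≤ (n + 1) * n.choose k := by
  obtain ⟨l, rfl⟩ := Nat.exists_eq_add_of_le hk
  have hpos : (0 : ℝ) < k ^ k * l ^ l := by
    exact_mod_cast mul_pos Nat.pow_self_pos Nat.pow_self_pos
  refine le_of_mul_le_mul_right ?_ hpos
  rw [exp_mul_binEntropy_mul_pow_mul_pow, mul_assoc]
  exact_mod_cast add_pow_le_succ_mul_choose_mul_pow_mul_pow k l

/-! ### Exponential growth -/

lemma expGrowthInf_exp_mul_of_tendsto {a : ℕ → EReal} {b : EReal} (h : Tendsto a atTop (𝓝 b)) :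
    expGrowthInf (fun n => EReal.exp (a n * n)) = b := by
  refine (h.congr' ?_).liminf_eq
  filter_upwards [eventually_ne_atTop 0] with n hn
  rw [EReal.log_exp, ← EReal.mul_div_right, EReal.div_mul_cancel (EReal.natCast_ne_bot n)
    (EReal.natCast_ne_top n) (by exact_mod_cast hn)]

lemma expGrowthSup_natCast_add_one : expGrowthSup (fun n => (n : ℝ≥0∞) + 1) = 0 := by
  have h : Tendsto (fun n : ℕ => log (n + 1) / n) atTop (𝓝 0) := by
    simpa [Function.comp_def] using (tendsto_pow_log_div_mul_add_atTop 1 (-1) 1 one_ne_zero).comp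
      (tendsto_atTop_add_const_right atTop (1 : ℝ) tendsto_natCast_atTop_atTop)
  refine ((continuous_coe_real_ereal.tendsto 0).comp h).congr (fun n => ?_) |>.limsup_eq
  have hofReal : (n : ℝ≥0∞) + 1 = ENNReal.ofReal (n + 1) := by
    rw [ENNReal.ofReal_add (by positivity) zero_le_one]; simp
  simp only [hofReal, Function.comp_apply]
  rw [ENNReal.log_ofReal_of_pos (by positivity)]
  exact EReal.coe_div _ _

lemma expGrowthSup_natCast_add_one_mul_le (u : ℕ → ℝ≥0∞) :
    expGrowthSup (fun n => (n + 1) * u n) ≤ expGrowthSup u := by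
  refine (expGrowthSup_mul_le (u := fun n => (n : ℝ≥0∞) + 1) ?_ ?_).trans_eq ?_ <;>
    simp [expGrowthSup_natCast_add_one]

lemma expGrowthInf_natCast_add_one_mul_le (u : ℕ → ℝ≥0∞) :
    expGrowthInf (fun n => (n + 1) * u n) ≤ expGrowthInf u := by
  refine (expGrowthInf_mul_le (u := fun n => (n : ℝ≥0∞) + 1) ?_ ?_).trans_eq ?_ <;>
    simp [expGrowthSup_natCast_add_one]

/-! ### Magnetization levels -/

/-- The number of up spins (`true` entries) of a configuration. -/
def upCount {ι : Type*} [Fintype ι] (x : ι → Bool) : ℕ := Finset.card {i | x i}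

lemma upCount_le_card {ι : Type*} [Fintype ι] (x : ι → Bool) : upCount x ≤ Fintype.card ι :=
  Finset.card_le_univ _

lemma card_filter_upCount_eq (ι : Type*) [Fintype ι] [DecidableEq ι] (k : ℕ) :
    Finset.card {x : ι → Bool | upCount x = k} = (Fintype.card ι).choose k := by
  rw [← Finset.card_univ, ← Finset.card_powersetCard]
  refine Finset.card_nbij' (fun x => ({i | x i} : Finset ι)) (fun s i => decide (i ∈ s)) ?_ ?_ ?_ ?_
  · intro x hx
    simpa [upCount, Finset.mem_powersetCard] using Finset.mem_filter.1 hx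
  · intro s hs
    refine Finset.mem_filter.2 ⟨Finset.mem_univ _, ?_⟩
    simpa [upCount] using (Finset.mem_powersetCard.1 hs).2
  · intro x _
    simp
  · intro s _
    simp

/-- The magnetization per particle `2k/n - 1` of a configuration of `n` spins, `k` of them up
(`-1` at `n = 0`). -/
def levelMag (n k : ℕ) : ℝ := 2 * (k / n) - 1

lemma levelMag_mem_Icc {n k : ℕ} (hk : k ≤ n) : levelMag n k ∈ Set.Icc (-1) 1 := by
  have hnonneg : (0 : ℝ) ≤ k / n := by positivity
  have hle : (k : ℝ) / n ≤ 1 := div_le_one_of_le₀ (by exact_mod_cast hk) (by positivity)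
  constructor <;> unfold levelMag <;> linarith

lemma totalMag_eq_two_mul_upCount_sub (n : ℕ) (x : Fin n → Bool) :
    totalMag n x = 2 * upCount x - n := by
  have hspin (b : Bool) : spin b = 2 * (if b then 1 else 0) - 1 := by
    cases b <;> norm_num [spin]
  rw [totalMag, Finset.sum_congr rfl fun i _ => hspin (x i), Finset.sum_sub_distrib,
    ← Finset.mul_sum]
  simp [upCount]

lemma magPP_eq_levelMag_upCount {n : ℕ} (hn : n ≠ 0) (x : Fin n → Bool) :
    magPP n x = levelMag n (upCount x) := by
  rw [magPP, totalMag_eq_two_mul_upCount_sub, levelMag]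
  field_simp

lemma binEnt_eq_neg_binEntropy (m : ℝ) : binEnt m = -binEntropy ((1 + m) / 2) := by
  rw [binEnt, binEntropy_eq_negMulLog_add_negMulLog_one_sub, negMulLog, negMulLog,
    show 1 - (1 + m) / 2 = (1 - m) / 2 by ring]
  ring

lemma continuous_binEnt : Continuous binEnt := by
  simp only [funext binEnt_eq_neg_binEntropy]
  fun_prop

lemma binEnt_levelMag (n k : ℕ) : binEnt (levelMag n k) = -binEntropy (k / n) := by
  rw [binEnt_eq_neg_binEntropy, levelMag]
  congr 2
  ring

lemma exists_levelMag_tendsto {m : ℝ} (hm : m ∈ Set.Icc (-1) 1) :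
    ∃ k : ℕ → ℕ, (∀ n, k n ≤ n) ∧ Tendsto (fun n => levelMag n (k n)) atTop (𝓝 m) := by
  have hnonneg : 0 ≤ (1 + m) / 2 := by linarith [hm.1]
  refine ⟨fun n => ⌊(1 + m) / 2 * (n : ℝ)⌋₊, fun n => Nat.floor_le_of_le ?_, ?_⟩
  · exact mul_le_of_le_one_left n.cast_nonneg (by linarith [hm.2])
  · have h := ((tendsto_nat_floor_mul_div_atTop hnonneg).comp
      (tendsto_natCast_atTop_atTop (R := ℝ))).const_mul 2 |>.sub_const 1
    rwa [show 2 * ((1 + m) / 2) - 1 = m by ring] at h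

/-! ### Gibbs weights -/

/-- The unnormalized Gibbs measure of the mean-field model of `n` spins with interaction `g`, which
weights a configuration of magnetization per particle `m` by `exp (n * g m)`. -/
def gibbsWeight (g : ℝ → ℝ) (n : ℕ) : Measure (Fin n → Bool) :=
  ∑ x, ENNReal.ofReal (exp (n * g (magPP n x))) • Measure.dirac x

/-- The free energy per particle `I(m) - g(m)` at magnetization `m`. -/
def freeEnergy (g : ℝ → ℝ) (m : ℝ) : ℝ := binEnt m - g m

section

variable (g : ℝ → ℝ) {n k : ℕ}

lemma gibbsWeight_apply (n : ℕ) (s : Set (Fin n → Bool)) [DecidablePred (· ∈ s)] :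
    gibbsWeight g n s = ∑ x with x ∈ s, ENNReal.ofReal (exp (n * g (magPP n x))) := by
  simp [gibbsWeight, Measure.finsetSum_apply, Finset.sum_filter, Set.indicator_apply]

lemma gibbsWeight_upCount_eq (hn : n ≠ 0) (k : ℕ) :
    gibbsWeight g n {x | upCount x = k} =
      n.choose k * ENNReal.ofReal (exp (n * g (levelMag n k))) := by
  have hconst : ∀ x ∈ ({x | upCount x = k} : Finset (Fin n → Bool)),
      ENNReal.ofReal (exp (n * g (magPP n x))) =
        ENNReal.ofReal (exp (n * g (levelMag n k))) := fun x hx => by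
    rw [magPP_eq_levelMag_upCount hn, (Finset.mem_filter.1 hx).2]
  simp only [gibbsWeight_apply, Set.mem_ofPred_eq]
  rw [Finset.sum_congr rfl hconst, Finset.sum_const, card_filter_upCount_eq, Fintype.card_fin,
    nsmul_eq_mul]

lemma exp_neg_freeEnergy_levelMag (n k : ℕ) :
    EReal.exp (-freeEnergy g (levelMag n k) * n) =
      ENNReal.ofReal (exp (n * binEntropy (k / n))) *
        ENNReal.ofReal (exp (n * g (levelMag n k))) := by
  rw [← ENNReal.ofReal_mul (exp_pos _).le, ← Real.exp_add, ← EReal.exp_coe, freeEnergy,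
    binEnt_levelMag]
  congr 1
  norm_cast
  ring

lemma gibbsWeight_upCount_eq_le (hn : n ≠ 0) (hk : k ≤ n) :
    gibbsWeight g n {x | upCount x = k} ≤ EReal.exp (-freeEnergy g (levelMag n k) * n) := by
  rw [gibbsWeight_upCount_eq g hn, exp_neg_freeEnergy_levelMag]
  gcongr
  rw [← ENNReal.ofReal_natCast]
  exact ENNReal.ofReal_le_ofReal (choose_le_exp_mul_binEntropy hk)

lemma exp_neg_freeEnergy_le_gibbsWeight (hn : n ≠ 0) (hk : k ≤ n) :
    EReal.exp (-freeEnergy g (levelMag n k) * n) ≤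
      (n + 1) * gibbsWeight g n {x | upCount x = k} := by
  rw [gibbsWeight_upCount_eq g hn, exp_neg_freeEnergy_levelMag, ← mul_assoc]
  gcongr
  refine ENNReal.ofReal_le_of_le_toReal ?_
  simpa [ENNReal.toReal_add] using exp_mul_binEntropy_le_succ_mul_choose hk

lemma gibbsWeight_magPP_mem_le (hn : n ≠ 0) {A : Set ℝ} {b : EReal}
    (hb : ∀ m ∈ A ∩ Set.Icc (-1) 1, b ≤ freeEnergy g m) :
    gibbsWeight g n {x | magPP n x ∈ A} ≤ (n + 1) * EReal.exp (-b * n) := by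
  classical
  let levels : Finset ℕ := {k ∈ Finset.range (n + 1) | levelMag n k ∈ A}
  have hcover : {x | magPP n x ∈ A} ⊆ ⋃ k ∈ levels, {x : Fin n → Bool | upCount x = k} := by
    intro x hx
    have hup : upCount x ≤ n := (upCount_le_card x).trans_eq (Fintype.card_fin n)
    rw [Set.mem_ofPred_eq, magPP_eq_levelMag_upCount hn] at hx
    simpa [levels] using ⟨hup, hx⟩
  have hlevel : ∀ k ∈ levels,
      gibbsWeight g n {x | upCount x = k} ≤ EReal.exp (-b * n) := fun k hk => by
    obtain ⟨hkn, hkA⟩ := Finset.mem_filter.1 hk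
    have hkn : k ≤ n := Finset.mem_range_succ_iff.1 hkn
    refine (gibbsWeight_upCount_eq_le g hn hkn).trans (EReal.exp_monotone ?_)
    exact mul_le_mul_of_nonneg_right
      (EReal.neg_le_neg_iff.2 (hb _ ⟨hkA, levelMag_mem_Icc hkn⟩)) n.cast_nonneg'
  calc gibbsWeight g n {x | magPP n x ∈ A}
      ≤ ∑ k ∈ levels, gibbsWeight g n {x | upCount x = k} :=
        (measure_mono hcover).trans (measure_biUnion_finset_le _ _)
    _ ≤ levels.card * EReal.exp (-b * n) := by
        simpa using Finset.sum_le_card_nsmul _ _ _ hlevel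
    _ ≤ (n + 1) * EReal.exp (-b * n) := by
        gcongr
        exact_mod_cast (Finset.card_filter_le _ _).trans_eq (Finset.card_range (n + 1))

lemma expGrowthSup_gibbsWeight_le {A : Set ℝ} {b : EReal}
    (hb : ∀ m ∈ A ∩ Set.Icc (-1) 1, b ≤ freeEnergy g m) :
    expGrowthSup (fun n => gibbsWeight g n {x | magPP n x ∈ A}) ≤ -b :=
  calc expGrowthSup (fun n => gibbsWeight g n {x | magPP n x ∈ A})
      ≤ expGrowthSup (fun n : ℕ => (n + 1) * EReal.exp (-b * n)) := by
        refine expGrowthSup_eventually_monotone ?_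
        filter_upwards [eventually_ne_atTop 0] with n hn using gibbsWeight_magPP_mem_le g hn hb
    _ ≤ expGrowthSup (fun n : ℕ => EReal.exp (-b * n)) := expGrowthSup_natCast_add_one_mul_le _
    _ = -b := expGrowthSup_exp

variable {g}

lemma neg_freeEnergy_le_expGrowthInf_gibbsWeight {U : Set ℝ} (hU : IsOpen U) {m : ℝ}
    (hm : m ∈ U ∩ Set.Icc (-1) 1) (hg : ContinuousWithinAt g (Set.Icc (-1) 1) m) :
    -freeEnergy g m ≤
      expGrowthInf (fun n => gibbsWeight g n {x | magPP n x ∈ U ∩ Set.Icc (-1) 1}) := by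
  obtain ⟨k, hk, hlim⟩ := exists_levelMag_tendsto hm.2
  have hcont : ContinuousWithinAt (freeEnergy g) (Set.Icc (-1) 1) m :=
    continuous_binEnt.continuousWithinAt.sub hg
  have hwithin : Tendsto (fun n => levelMag n (k n)) atTop (𝓝[Set.Icc (-1) 1] m) :=
    tendsto_nhdsWithin_iff.2 ⟨hlim, .of_forall fun n => levelMag_mem_Icc (hk n)⟩
  have henergy : Tendsto (fun n => (-freeEnergy g (levelMag n (k n)) : EReal)) atTop
      (𝓝 (-freeEnergy g m)) :=
    (continuous_coe_real_ereal.tendsto _).comp (hcont.tendsto.comp hwithin).neg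
  calc (-freeEnergy g m : EReal)
      = expGrowthInf (fun n => EReal.exp (-freeEnergy g (levelMag n (k n)) * n)) :=
        (expGrowthInf_exp_mul_of_tendsto henergy).symm
    _ ≤ expGrowthInf (fun n => (n + 1) * gibbsWeight g n {x | magPP n x ∈ U ∩ Set.Icc (-1) 1}) := by
        refine expGrowthInf_eventually_monotone ?_
        filter_upwards [eventually_ne_atTop 0, hlim.eventually_mem (hU.mem_nhds hm.1)]
          with n hn hnU
        have hlevel : {x : Fin n → Bool | upCount x = k n} ⊆
            {x | magPP n x ∈ U ∩ Set.Icc (-1) 1} := by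
          rintro x (hx : upCount x = k n)
          rw [Set.mem_ofPred_eq, magPP_eq_levelMag_upCount hn, hx]
          exact ⟨hnU, levelMag_mem_Icc (hk n)⟩
        refine (exp_neg_freeEnergy_le_gibbsWeight g hn (hk n)).trans ?_
        gcongr
    _ ≤ expGrowthInf (fun n => gibbsWeight g n {x | magPP n x ∈ U ∩ Set.Icc (-1) 1}) :=
        expGrowthInf_natCast_add_one_mul_le _

end

/-! ### The large deviation principle -/

/-- The minimal free energy per particle over `[-1, 1]`, that is, minus the exponential growth rate
of the partition function. -/
def minFreeEnergy (g : ℝ → ℝ) : ℝ := sInf (freeEnergy g '' Set.Icc (-1) 1)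

/-- The Curie–Weiss probability measure on `n` spins with interaction `g`. -/
def curieWeissMeasure (g : ℝ → ℝ) (n : ℕ) : Measure (Fin n → Bool) :=
  (gibbsWeight g n Set.univ)⁻¹ • gibbsWeight g n

/-- The rate function of the magnetization per particle under the Curie–Weiss measures with
interaction `g`. -/
def curieWeissRate (g : ℝ → ℝ) (m : ℝ) : ℝ := freeEnergy g m - minFreeEnergy g

lemma isLeast_minFreeEnergy {g : ℝ → ℝ} (hg : ContinuousOn g (Set.Icc (-1) 1)) :
    IsLeast (freeEnergy g '' Set.Icc (-1) 1) (minFreeEnergy g) :=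
  (isCompact_Icc.image_of_continuousOn (continuous_binEnt.continuousOn.sub hg)).isLeast_sInf
    ((Set.nonempty_Icc.2 (by norm_num)).image _)

lemma neg_minFreeEnergy_le_expGrowthInf_gibbsWeight_univ {g : ℝ → ℝ}
    (hg : ContinuousOn g (Set.Icc (-1) 1)) :
    -minFreeEnergy g ≤ expGrowthInf (fun n => gibbsWeight g n Set.univ) := by
  obtain ⟨m, hm, hmin⟩ := (isLeast_minFreeEnergy hg).1
  rw [← hmin]
  exact (neg_freeEnergy_le_expGrowthInf_gibbsWeight isOpen_univ ⟨Set.mem_univ m, hm⟩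
    (hg m hm)).trans (expGrowthInf_monotone fun n => measure_mono (Set.subset_univ _))

lemma expGrowthSup_gibbsWeight_univ_le {g : ℝ → ℝ} (hg : ContinuousOn g (Set.Icc (-1) 1)) :
    expGrowthSup (fun n => gibbsWeight g n Set.univ) ≤ -minFreeEnergy g := by
  have hbound (m : ℝ) (hm : m ∈ Set.univ ∩ Set.Icc (-1) 1) :
      (minFreeEnergy g : EReal) ≤ freeEnergy g m :=
    EReal.coe_le_coe_iff.2 ((isLeast_minFreeEnergy hg).2 ⟨m, hm.2, rfl⟩)
  simpa only [Set.mem_univ, Set.ofPred_true] using expGrowthSup_gibbsWeight_le g hbound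

lemma expGrowthInf_gibbsWeight_univ {g : ℝ → ℝ} (hg : ContinuousOn g (Set.Icc (-1) 1)) :
    expGrowthInf (fun n => gibbsWeight g n Set.univ) = -minFreeEnergy g :=
  (expGrowthInf_le_expGrowthSup.trans (expGrowthSup_gibbsWeight_univ_le hg)).antisymm
    (neg_minFreeEnergy_le_expGrowthInf_gibbsWeight_univ hg)

lemma expGrowthSup_gibbsWeight_univ {g : ℝ → ℝ} (hg : ContinuousOn g (Set.Icc (-1) 1)) :
    expGrowthSup (fun n => gibbsWeight g n Set.univ) = -minFreeEnergy g :=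
  (expGrowthSup_gibbsWeight_univ_le hg).antisymm
    ((neg_minFreeEnergy_le_expGrowthInf_gibbsWeight_univ hg).trans expGrowthInf_le_expGrowthSup)

lemma expGrowthSup_curieWeissMeasure_le {g : ℝ → ℝ} (hg : ContinuousOn g (Set.Icc (-1) 1))
    (s : ∀ n, Set (Fin n → Bool)) :
    expGrowthSup (fun n => curieWeissMeasure g n (s n)) ≤
      minFreeEnergy g + expGrowthSup (fun n => gibbsWeight g n (s n)) := by
  have hinv : expGrowthSup (fun n => gibbsWeight g n Set.univ)⁻¹ = minFreeEnergy g := by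
    rw [expGrowthSup_inv, expGrowthInf_gibbsWeight_univ hg, neg_neg]
  rw [← hinv]
  exact expGrowthSup_mul_le (.inl (hinv.trans_ne (EReal.coe_ne_bot _)))
    (.inl (hinv.trans_ne (EReal.coe_ne_top _)))

lemma le_expGrowthInf_curieWeissMeasure {g : ℝ → ℝ} (hg : ContinuousOn g (Set.Icc (-1) 1))
    (s : ∀ n, Set (Fin n → Bool)) :
    minFreeEnergy g + expGrowthInf (fun n => gibbsWeight g n (s n)) ≤
      expGrowthInf (fun n => curieWeissMeasure g n (s n)) := by
  have hinv : expGrowthInf (fun n => gibbsWeight g n Set.univ)⁻¹ = minFreeEnergy g := by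
    rw [expGrowthInf_inv, expGrowthSup_gibbsWeight_univ hg, neg_neg]
  rw [← hinv]
  exact le_expGrowthInf_mul

lemma curieWeiss_ldp_upper {g : ℝ → ℝ} (hg : ContinuousOn g (Set.Icc (-1) 1)) (A : Set ℝ) :
    expGrowthSup (fun n => curieWeissMeasure g n {x | magPP n x ∈ A}) ≤
      -⨅ m ∈ A ∩ Set.Icc (-1) 1, (curieWeissRate g m : EReal) := by
  set r : EReal := ⨅ m ∈ A ∩ Set.Icc (-1) 1, (curieWeissRate g m : EReal)
  have hbound (m : ℝ) (hm : m ∈ A ∩ Set.Icc (-1) 1) : r + minFreeEnergy g ≤ freeEnergy g m := by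
    calc r + minFreeEnergy g ≤ curieWeissRate g m + minFreeEnergy g := by
          gcongr
          exact iInf₂_le m hm
      _ = freeEnergy g m := by
          rw [curieWeissRate, EReal.coe_sub, EReal.sub_add_cancel]
  calc expGrowthSup (fun n => curieWeissMeasure g n {x | magPP n x ∈ A})
      ≤ minFreeEnergy g + expGrowthSup (fun n => gibbsWeight g n {x | magPP n x ∈ A}) :=
        expGrowthSup_curieWeissMeasure_le hg _
    _ ≤ minFreeEnergy g - (r + minFreeEnergy g) := by
        rw [sub_eq_add_neg]
        gcongr
        exact expGrowthSup_gibbsWeight_le g hbound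
    _ = -r := EReal.sub_add_cancel_right

lemma curieWeiss_ldp_lower {g : ℝ → ℝ} (hg : ContinuousOn g (Set.Icc (-1) 1)) {U : Set ℝ}
    (hU : IsOpen U) :
    -⨅ m ∈ U ∩ Set.Icc (-1) 1, (curieWeissRate g m : EReal) ≤
      expGrowthInf (fun n => curieWeissMeasure g n {x | magPP n x ∈ U ∩ Set.Icc (-1) 1}) := by
  refine EReal.neg_le.1 (le_iInf₂ fun m hm => EReal.neg_le.1 ?_)
  calc (-curieWeissRate g m : EReal) = minFreeEnergy g + -freeEnergy g m := by
        rw [curieWeissRate]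
        norm_cast
        ring
    _ ≤ minFreeEnergy g +
          expGrowthInf (fun n => gibbsWeight g n {x | magPP n x ∈ U ∩ Set.Icc (-1) 1}) := by
        gcongr
        exact neg_freeEnergy_le_expGrowthInf_gibbsWeight hU hm (hg m hm.2)
    _ ≤ expGrowthInf (fun n => curieWeissMeasure g n {x | magPP n x ∈ U ∩ Set.Icc (-1) 1}) :=
        le_expGrowthInf_curieWeissMeasure hg _

theorem stmt_7_general {g : ℝ → ℝ} (hg : ContinuousOn g (Set.Icc (-1) 1)) :
    (∀ A : Set ℝ,
      expGrowthSup (fun n => curieWeissMeasure g n {x | magPP n x ∈ A}) ≤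
        -⨅ m ∈ A ∩ Set.Icc (-1) 1, (curieWeissRate g m : EReal)) ∧
    (∀ U : Set ℝ, IsOpen U →
      -⨅ m ∈ U ∩ Set.Icc (-1) 1, (curieWeissRate g m : EReal) ≤
        expGrowthInf (fun n => curieWeissMeasure g n {x | magPP n x ∈ U ∩ Set.Icc (-1) 1})) :=
  ⟨curieWeiss_ldp_upper hg, fun _ => curieWeiss_ldp_lower hg⟩

/-- The interaction `(K/3)m³ + (J/2)m²` of the cubic Curie–Weiss model. -/
def cubicInteraction (K J m : ℝ) : ℝ := K / 3 * m ^ 3 + J / 2 * m ^ 2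

lemma continuous_cubicInteraction (K J : ℝ) : Continuous (cubicInteraction K J) := by
  unfold cubicInteraction
  fun_prop

lemma cubicMeasure_eq_curieWeissMeasure (n : ℕ) (K J : ℝ) :
    cubicMeasure n K J = curieWeissMeasure (cubicInteraction K J) n := by
  classical
  rw [curieWeissMeasure, gibbsWeight_apply]
  simp only [Set.mem_univ, Finset.filter_true]
  rfl

lemma phiKJ_eq_freeEnergy (K J : ℝ) : phiKJ K J = freeEnergy (cubicInteraction K J) :=
  funext fun _ => sub_sub _ _ _

lemma rateKJ_eq_curieWeissRate (K J : ℝ) :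
    rateKJ K J = curieWeissRate (cubicInteraction K J) := by
  funext m
  rw [rateKJ, phiKJ_eq_freeEnergy, curieWeissRate, minFreeEnergy]

end

/-- Large deviation principle for the magnetization per particle in the cubic
Curie–Weiss model: speed `n` and rate function `I_{K,J}`, with the upper bound for
closed sets and the lower bound for (relatively) open sets of `[-1,1]`. -/
theorem stmt_7 (K J : ℝ) (hK : 0 < K) :
    (∀ F : Set ℝ, IsClosed F → F ⊆ Set.Icc (-1) 1 →
      Filter.limsup
          (fun n : ℕ =>
            ENNReal.log (cubicMeasure n K J {x | magPP n x ∈ F}) / ((n : ℝ) : EReal))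
          Filter.atTop
        ≤ -(⨅ m ∈ F, ((rateKJ K J m : ℝ) : EReal))) ∧
    (∀ G : Set ℝ, (∃ U : Set ℝ, IsOpen U ∧ G = U ∩ Set.Icc (-1) 1) →
      -(⨅ m ∈ G, ((rateKJ K J m : ℝ) : EReal)) ≤
        Filter.liminf
          (fun n : ℕ =>
            ENNReal.log (cubicMeasure n K J {x | magPP n x ∈ G}) / ((n : ℝ) : EReal))
          Filter.atTop) := by
  obtain ⟨hupper, hlower⟩ := stmt_7_general (continuous_cubicInteraction K J).continuousOn
  simp only [cubicMeasure_eq_curieWeissMeasure, rateKJ_eq_curieWeissRate]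
  refine ⟨fun F _ hF => (hupper F).trans_eq (by rw [Set.inter_eq_left.2 hF]), ?_⟩
  rintro _ ⟨U, hU, rfl⟩
  exact hlower U hU
end

section
/- Let n ≥ 1, K > 0, J ∈ ℝ, and let X = (X₁,…,X_n) be distributed according to P_{n,K,J}. For each i ∈ {1,…,n}, let m_i(X) = (1/n)·Σ_{j≠i} X_j. Then almost surely, the conditional expectation of X_i given the σ-algebra generated by (X_j)_{j≠i} equals tanh( J·m_i(X) + K·m_i(X)² + K/(3n²) ). -/
/-!
The `i`-th spin takes the values `±1` and is negated by the flip of coordinate `i`, which preserves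
counting measure and every event determined by the other spins. With `exp H` the Boltzmann–Gibbs
weight, the flip lowers `H` by `2 x_i θ`, where the local field `θ = J m_i + K m_i² + K / (3 n²)`
depends only on the other spins. Hence `exp(H) (x_i - tanh θ)` is odd under the flip and integrates
to zero over each such event.
-/

open MeasureTheory ProbabilityTheory Real Filter

noncomputable section

/-- The probability of an event under `P_{n,K,J}`, as a real number. -/
def cubicProb (n : ℕ) (K J : ℝ) (s : Set (Fin n → Bool)) : ℝ :=
  (cubicMeasure n K J s).toReal

/-- The magnetization leaving out the `i`-th spin: `m_i(x) = (1/n) ∑_{j ≠ i} x_j`. -/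
def magExcept (n : ℕ) (i : Fin n) (x : Fin n → Bool) : ℝ :=
  (∑ j ∈ Finset.univ.erase i, spin (x j)) / n

end

section Tilted

variable {Ω : Type*} {m mΩ : MeasurableSpace Ω} {μ : Measure Ω} {σ : Ω → Ω}

lemma setIntegral_eq_zero_of_comp_eq_neg {E : Type*} [NormedAddCommGroup E] [NormedSpace ℝ E]
    (hσ : MeasurePreserving σ μ μ) (hσe : MeasurableEmbedding σ) {s : Set Ω} (hs : σ ⁻¹' s = s)
    {f : Ω → E} (hf : ∀ ω, f (σ ω) = -f ω) : ∫ ω in s, f ω ∂μ = 0 := by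
  have h_neg : ∫ ω in s, f ω ∂μ = -∫ ω in s, f ω ∂μ :=
    calc ∫ ω in s, f ω ∂μ
      _ = ∫ ω in σ ⁻¹' s, f (σ ω) ∂μ := (hσ.setIntegral_preimage_emb hσe f s).symm
      _ = -∫ ω in s, f ω ∂μ := by simp only [hs, hf, integral_neg]
  have : IsAddTorsionFree E := .of_isTorsionFree ℝ E
  exact self_eq_neg.mp h_neg

lemma exp_two_mul_mul_one_sub_tanh (t : ℝ) : exp (2 * t) * (1 - tanh t) = 1 + tanh t := by
  have h_pos : exp t + exp (-t) ≠ 0 := by positivity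
  have h_inv : exp t * exp (-t) = 1 := by rw [← exp_add, add_neg_cancel, exp_zero]
  rw [tanh_eq, two_mul, exp_add]
  field_simp
  linear_combination 2 * exp t * h_inv

lemma exp_mul_neg_sub_tanh {a b s t : ℝ} (hs : |s| = 1) (hab : a - b = 2 * s * t) :
    exp b * (-s - tanh t) = -(exp a * (s - tanh t)) := by
  obtain rfl : a = b + 2 * s * t := by linarith
  rw [exp_add]
  rcases eq_or_eq_neg_of_abs_eq hs with rfl | rfl
  · rw [mul_one]
    linear_combination exp b * exp_two_mul_mul_one_sub_tanh t
  · have h := exp_two_mul_mul_one_sub_tanh (-t)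
    rw [tanh_neg] at h
    rw [show 2 * -1 * t = 2 * -t by ring]
    linear_combination -exp b * h

theorem condExp_tilted_ae_eq_tanh {X θ H : Ω → ℝ} (hσ : MeasurePreserving σ μ μ)
    (hσe : MeasurableEmbedding σ) (hm : m ≤ MeasurableSpace.invariants σ) (hX : Measurable X)
    (hX_abs : ∀ ω, |X ω| = 1) (hXσ : ∀ ω, X (σ ω) = -X ω) (hθ : Measurable[m] θ)
    (hH : ∀ ω, H ω - H (σ ω) = 2 * X ω * θ ω) :
    (μ.tilted H)[X | m] =ᵐ[μ.tilted H] fun ω ↦ tanh (θ ω) := by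
  have hm_le : m ≤ mΩ := hm.trans (MeasurableSpace.invariants_le σ)
  have hθσ (ω : Ω) : θ (σ ω) = θ ω :=
    congrFun (MeasurableSpace.comp_eq_of_measurable_invariants (hθ.mono hm le_rfl)) ω
  have h_meas : Measurable[m] fun ω ↦ tanh (θ ω) := by
    simp only [tanh_eq_sinh_div_cosh]
    fun_prop
  have hX_int : Integrable X (μ.tilted H) :=
    .of_bound hX.aestronglyMeasurable 1 (.of_forall fun ω ↦ (hX_abs ω).le)
  have h_int : Integrable (fun ω ↦ tanh (θ ω)) (μ.tilted H) :=
    .of_bound (h_meas.mono hm_le le_rfl).aestronglyMeasurable 1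
      (.of_forall fun ω ↦ (abs_tanh_lt_one _).le)
  refine (ae_eq_condExp_of_forall_setIntegral_eq hm_le hX_int (fun _ _ _ ↦ h_int.integrableOn)
    (fun s hs _ ↦ ?_) h_meas.aestronglyMeasurable).symm
  have h_zero : ∫ ω in s, X ω - tanh (θ ω) ∂μ.tilted H = 0 := by
    rw [setIntegral_tilted' _ _ (hm_le s hs)]
    refine setIntegral_eq_zero_of_comp_eq_neg hσ hσe (hm s hs).2 fun ω ↦ ?_
    simp only [hXσ, hθσ, smul_eq_mul, div_mul_eq_mul_div,
      exp_mul_neg_sub_tanh (hX_abs ω) (hH ω), neg_div]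
  rw [integral_sub hX_int.integrableOn h_int.integrableOn, sub_eq_zero] at h_zero
  exact h_zero.symm

end Tilted

section CountingMeasure

variable {α β : Type*} [MeasurableSpace α]

lemma measurePreserving_count_of_bijective [MeasurableSpace β] {f : α → β} (hf : Measurable f)
    (hf_bij : f.Bijective) : MeasurePreserving f Measure.count Measure.count := by
  refine ⟨hf, Measure.ext fun s hs ↦ ?_⟩
  rw [Measure.map_apply hf hs, Measure.count_apply (hf hs), Measure.count_apply hs,
    Set.encard_preimage_of_bijective hf_bij]

lemma count_tilted [Fintype α] [MeasurableSingletonClass α] (H : α → ℝ) :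
    (Measure.count : Measure α).tilted H =
      (∑ x, ENNReal.ofReal (exp (H x)))⁻¹ • ∑ x, ENNReal.ofReal (exp (H x)) • Measure.dirac x := by
  have h_density (x : α) : ENNReal.ofReal (exp (H x) / ∑ y, exp (H y)) =
      (∑ y, ENNReal.ofReal (exp (H y)))⁻¹ * ENNReal.ofReal (exp (H x)) := by
    have h_pos : 0 < ∑ y, exp (H y) :=
      Finset.sum_pos (fun _ _ ↦ exp_pos _) ⟨x, Finset.mem_univ x⟩
    rw [ENNReal.ofReal_div_of_pos h_pos, ENNReal.ofReal_sum_of_nonneg fun _ _ ↦ (exp_pos _).le,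
      ENNReal.div_eq_inv_mul]
  simp only [Measure.tilted, integral_count, count_withDensity, Measure.sum_fintype, h_density,
    mul_smul, Finset.smul_sum]

end CountingMeasure

section SpinFlip

variable {ι : Type*}

/-- The σ-algebra on spin configurations generated by the spins other than the `i`-th one, on which
the single-site conditional expectation is conditioned. -/
abbrev otherSpins (i : ι) : MeasurableSpace (ι → Bool) :=
  MeasurableSpace.comap (fun (x : ι → Bool) (j : {j : ι // j ≠ i}) ↦ x j.1) MeasurableSpace.pi

lemma measurable_otherSpins_apply {i j : ι} (hij : j ≠ i) :
    Measurable[otherSpins i] fun x : ι → Bool ↦ x j :=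
  (measurable_pi_apply (⟨j, hij⟩ : {j : ι // j ≠ i})).comp
    (comap_measurable fun (x : ι → Bool) (j : {j : ι // j ≠ i}) ↦ x j)

lemma measurable_spin : Measurable spin := measurable_from_top

lemma abs_spin (b : Bool) : |spin b| = 1 := by cases b <;> simp [spin]

lemma spin_not (b : Bool) : spin (!b) = -spin b := by cases b <;> simp [spin]

variable [DecidableEq ι] {i : ι}

/-- The configuration `x` with its `i`-th spin reversed; the symmetry behind the single-site
conditional expectation. -/
def flipSpin (i : ι) (x : ι → Bool) : ι → Bool :=
  Function.update x i (!x i)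

lemma flipSpin_apply_self (x : ι → Bool) : flipSpin i x i = !x i := Function.update_self ..

lemma flipSpin_apply_of_ne {j : ι} (hij : j ≠ i) (x : ι → Bool) : flipSpin i x j = x j :=
  Function.update_of_ne hij ..

lemma flipSpin_involutive (i : ι) : Function.Involutive (flipSpin i) := fun x ↦ by
  simp [flipSpin]

lemma measurable_flipSpin (i : ι) : Measurable (flipSpin i) := by
  have h_not : Measurable fun x : ι → Bool ↦ !x i :=
    (Measurable.of_discrete (f := not)).comp (measurable_pi_apply i)
  exact measurable_update'.comp (measurable_id.prodMk h_not)

lemma otherSpins_le_invariants_flipSpin (i : ι) :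
    otherSpins i ≤ MeasurableSpace.invariants (flipSpin i) := by
  rintro _ ⟨s, hs, rfl⟩
  refine ⟨(by fun_prop : Measurable _) hs, ?_⟩
  have h_restrict (x : ι → Bool) :
      (fun j : {j : ι // j ≠ i} ↦ flipSpin i x j) = fun j : {j : ι // j ≠ i} ↦ x j :=
    funext fun j ↦ flipSpin_apply_of_ne j.2 x
  ext x
  simp only [Set.mem_preimage, h_restrict]

theorem condExp_spin_tilted_ae_eq_tanh {μ : Measure (ι → Bool)}
    (hμ : MeasurePreserving (flipSpin i) μ μ) {H θ : (ι → Bool) → ℝ}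
    (hθ : Measurable[otherSpins i] θ)
    (hH : ∀ x, H x - H (flipSpin i x) = 2 * spin (x i) * θ x) :
    (μ.tilted H)[fun x ↦ spin (x i) | otherSpins i] =ᵐ[μ.tilted H] fun x ↦ tanh (θ x) := by
  have h_emb : MeasurableEmbedding (flipSpin i) :=
    (MeasurableEquiv.ofInvolutive _ (flipSpin_involutive i) hμ.measurable).measurableEmbedding
  have hX : Measurable fun x : ι → Bool ↦ spin (x i) :=
    measurable_spin.comp (measurable_pi_apply i)
  refine condExp_tilted_ae_eq_tanh hμ h_emb (otherSpins_le_invariants_flipSpin i) hX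
    (fun x ↦ abs_spin (x i)) (fun x ↦ ?_) hθ hH
  rw [flipSpin_apply_self, spin_not]

end SpinFlip

section CubicCurieWeiss

variable {n : ℕ} {i : Fin n}

/-- The exponent of the Boltzmann–Gibbs weight `cubicWeight`, i.e. minus the Hamiltonian of the
cubic Curie–Weiss model. -/
noncomputable def cubicExponent (n : ℕ) (K J : ℝ) (x : Fin n → Bool) : ℝ :=
  n * (K / 3 * magPP n x ^ 3 + J / 2 * magPP n x ^ 2)

/-- The field which the other spins exert on the `i`-th spin: half the change of `cubicExponent` as
that spin goes from `-1` to `1`. -/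
noncomputable def localField (n : ℕ) (K J : ℝ) (i : Fin n) (x : Fin n → Bool) : ℝ :=
  J * magExcept n i x + K * magExcept n i x ^ 2 + K / (3 * (n : ℝ) ^ 2)

lemma cubicMeasure_eq_tilted (n : ℕ) (K J : ℝ) :
    cubicMeasure n K J = Measure.count.tilted (cubicExponent n K J) :=
  (count_tilted _).symm

lemma magPP_eq_magExcept_add (i : Fin n) (x : Fin n → Bool) :
    magPP n x = magExcept n i x + spin (x i) / n := by
  rw [magPP, magExcept, totalMag, ← Finset.sum_erase_add _ _ (Finset.mem_univ i), add_div]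

lemma measurable_magExcept (i : Fin n) : Measurable[otherSpins i] (magExcept n i) :=
  (Finset.measurable_fun_sum _ fun _ hj ↦ measurable_spin.comp
    (measurable_otherSpins_apply (Finset.ne_of_mem_erase hj))).div_const _

lemma measurable_localField (K J : ℝ) (i : Fin n) :
    Measurable[otherSpins i] (localField n K J i) := by
  have h_mag := measurable_magExcept i
  unfold localField
  fun_prop

lemma magExcept_flipSpin (x : Fin n → Bool) :
    magExcept n i (flipSpin i x) = magExcept n i x :=
  congrFun (MeasurableSpace.comp_eq_of_measurable_invariants
    ((measurable_magExcept i).mono (otherSpins_le_invariants_flipSpin i) le_rfl)) x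

lemma cubicExponent_sub_flipSpin (K J : ℝ) (i : Fin n) (x : Fin n → Bool) :
    cubicExponent n K J x - cubicExponent n K J (flipSpin i x) =
      2 * spin (x i) * localField n K J i x := by
  have hn : (n : ℝ) ≠ 0 := Nat.cast_ne_zero.mpr i.pos.ne'
  have h_sq : spin (x i) ^ 2 = 1 := by rw [← sq_abs, abs_spin, one_pow]
  simp only [cubicExponent, localField, magPP_eq_magExcept_add i, magExcept_flipSpin,
    flipSpin_apply_self, spin_not]
  field_simp
  linear_combination 4 * K * spin (x i) * h_sq

end CubicCurieWeiss

theorem stmt_14_general (n : ℕ) (K J : ℝ) (i : Fin n) :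
    (cubicMeasure n K J)[fun x ↦ spin (x i) | otherSpins i] =ᵐ[cubicMeasure n K J]
      fun x ↦ tanh (J * magExcept n i x + K * magExcept n i x ^ 2 + K / (3 * (n : ℝ) ^ 2)) := by
  have h_count : MeasurePreserving (flipSpin i) Measure.count Measure.count :=
    measurePreserving_count_of_bijective (measurable_flipSpin i) (flipSpin_involutive i).bijective
  rw [cubicMeasure_eq_tilted]
  exact condExp_spin_tilted_ae_eq_tanh h_count (measurable_localField K J i)
    (cubicExponent_sub_flipSpin K J i)

/-- Single-site conditional expectation in the cubic Curie–Weiss model: the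
conditional expectation of the spin `X_i` given the σ-algebra generated by the
other spins equals `tanh(J m_i(X) + K m_i(X)² + K/(3n²))` a.s. -/
theorem stmt_14 (n : ℕ) (hn : 1 ≤ n) (K J : ℝ) (hK : 0 < K) (i : Fin n) :
    ((cubicMeasure n K J)[fun x => spin (x i) |
        MeasurableSpace.comap (fun (x : Fin n → Bool) (j : {j : Fin n // j ≠ i}) => x j.1)
          MeasurableSpace.pi])
      =ᵐ[cubicMeasure n K J]
      fun x => Real.tanh (J * magExcept n i x + K * (magExcept n i x) ^ 2 +
        K / (3 * (n : ℝ) ^ 2)) :=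
  stmt_14_general n K J i
end
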